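/- Let d ≥ 2, let Σ ⊂ GL_d(ℝ) be a compact subset, and let μ₀ be a Borel probability measure supported in Σ which is quasi-irreducible and satisfies L_1(μ₀) > L_2(μ₀). For a Borel probability measure μ supported in Σ, define φ_μ : ℙ(ℝ^d) → ℝ by φ_μ(v̂) := ∫ log(‖gv‖/‖v‖) dμ(g). Then there exist C > 0, θ > 1 and ε > 0 such that for every Borel probability measure μ supported in Σ with ‖μ − μ₀‖_TV < ε, every n ≥ 1 and every v̂ ∈ ℙ(ℝ^d), |Q_μ^{n+1} φ_μ(v̂) − Q_μ^n φ_μ(v̂)| ≤ C θ^{−n}. -/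

import Mathlib

open MeasureTheory Filter
open scoped LinearAlgebra.Projectivization

noncomputable section

abbrev GLd (d : ℕ) := GL (Fin d) ℝ
abbrev Ed (d : ℕ) := EuclideanSpace ℝ (Fin d)
abbrev Pd (d : ℕ) := ℙ ℝ (Ed d)

variable {d : ℕ}

instance : MeasurableSpace (GLd d) := borel _
instance : BorelSpace (GLd d) := ⟨rfl⟩

instance : TopologicalSpace (Pd d) :=
  (instTopologicalSpaceQuotient : TopologicalSpace (Quotient (projectivizationSetoid ℝ (Ed d))))
instance : MeasurableSpace (Pd d) := borel _
instance : BorelSpace (Pd d) := ⟨rfl⟩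

/-- The continuous linear map on Euclidean space induced by `g ∈ GL_d(ℝ)`. -/
def glCLM (g : GLd d) : Ed d →L[ℝ] Ed d :=
  Matrix.toEuclideanCLM (𝕜 := ℝ) (g : Matrix (Fin d) (Fin d) ℝ)

/-- The operator norm of `g ∈ GL_d(ℝ)`. -/
def gnorm (g : GLd d) : ℝ := ‖glCLM g‖

lemma glCLM_leftInv (g : GLd d) (v : Ed d) : glCLM g⁻¹ (glCLM g v) = v := by
  have h : glCLM (d := d) g⁻¹ * glCLM g = 1 := by
    rw [glCLM, glCLM, ← map_mul]
    norm_cast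
    rw [inv_mul_cancel g]
    exact map_one _
  calc glCLM g⁻¹ (glCLM g v) = (glCLM g⁻¹ * glCLM g) v := rfl
    _ = v := by rw [h]; rfl

lemma glLinear_injective (g : GLd d) : Function.Injective (glCLM g).toLinearMap :=
  Function.LeftInverse.injective (g := (glCLM g⁻¹)) (fun v => glCLM_leftInv g v)

/-- The projective action of `g ∈ GL_d(ℝ)` on `ℙ(ℝ^d)`. -/
def pact (g : GLd d) : Pd d → Pd d :=
  Projectivization.map (glCLM g).toLinearMap (glLinear_injective g)

/-- The projective distance `δ` on `ℙ(ℝ^d)`, computed on representatives. -/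
def pdelta (x y : Pd d) : ℝ :=
  Real.sqrt (‖x.rep‖ ^ 2 * ‖y.rep‖ ^ 2 - (inner ℝ x.rep y.rep : ℝ) ^ 2) /
    (‖x.rep‖ * ‖y.rep‖)

/-- Convolution of two measures on `GL_d(ℝ)`. -/
def mconv (μ ν : Measure (GLd d)) : Measure (GLd d) :=
  (μ.prod ν).map (fun p => p.1 * p.2)

/-- `n`-fold convolution power of a measure on `GL_d(ℝ)`. -/
def mconvN (μ : Measure (GLd d)) : ℕ → Measure (GLd d)
  | 0 => Measure.dirac 1
  | n + 1 => if n = 0 then μ else mconv (mconvN μ n) μ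

/-- The top Lyapunov exponent of a (compactly supported) measure on `GL_d(ℝ)`. -/
def L1 (μ : Measure (GLd d)) : ℝ :=
  limUnder atTop (fun n : ℕ => (n : ℝ)⁻¹ * ∫ g, Real.log (gnorm g) ∂(mconvN μ n))

/-- `N₂ g = s₁(g)s₂(g)`, the product of the two largest singular values. -/
def N2 (g : GLd d) : ℝ :=
  sSup { x | ∃ p q : Ed d, ‖p‖ = 1 ∧ ‖q‖ = 1 ∧ (inner ℝ p q : ℝ) = 0 ∧
    x = Real.sqrt (‖glCLM g p‖ ^ 2 * ‖glCLM g q‖ ^ 2 -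
      (inner ℝ (glCLM g p) (glCLM g q) : ℝ) ^ 2) }

/-- `L₁(μ) + L₂(μ)`. -/
def L12 (μ : Measure (GLd d)) : ℝ :=
  limUnder atTop (fun n : ℕ => (n : ℝ)⁻¹ * ∫ g, Real.log (N2 g) ∂(mconvN μ n))

/-- The second Lyapunov exponent. -/
def L2 (μ : Measure (GLd d)) : ℝ := L12 μ - L1 μ

/-- The top Lyapunov exponent of the restriction of `μ` to an (invariant) subspace `V`. -/
def L1rest (μ : Measure (GLd d)) (V : Submodule ℝ (Ed d)) : ℝ :=
  limUnder atTop (fun n : ℕ => (n : ℝ)⁻¹ *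
    ∫ g, Real.log ‖LinearMap.toContinuousLinearMap ((glCLM g).toLinearMap.domRestrict V)‖
      ∂(mconvN μ n))

/-- Quasi-irreducibility of a measure on `GL_d(ℝ)`. -/
def QuasiIrreducible (μ : Measure (GLd d)) : Prop :=
  ¬ ∃ V : Submodule ℝ (Ed d), V ≠ ⊥ ∧ V ≠ ⊤ ∧
    (∀ᵐ g ∂μ, V.map (glCLM g).toLinearMap = V) ∧ L1rest μ V < L1 μ

/-- Irreducibility of a measure on `GL_d(ℝ)`. -/
def Irred (μ : Measure (GLd d)) : Prop :=
  ¬ ∃ V : Submodule ℝ (Ed d), V ≠ ⊥ ∧ V ≠ ⊤ ∧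
    (∀ᵐ g ∂μ, V.map (glCLM g).toLinearMap = V)

/-- The Markov operator associated with a measure on `GL_d(ℝ)`. -/
def Qop (μ : Measure (GLd d)) (φ : Pd d → ℝ) : Pd d → ℝ :=
  fun v => ∫ g, φ (pact g v) ∂μ

/-- The average `α`-Hölder constant of a measure on `GL_d(ℝ)`. -/
def kalpha (α : ℝ) (μ : Measure (GLd d)) : ℝ :=
  sSup { x | ∃ v₁ v₂ : Pd d, v₁ ≠ v₂ ∧
    x = ∫ g, (pdelta (pact g v₁) (pact g v₂) / pdelta v₁ v₂) ^ α ∂μ }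

/-- The `α`-Hölder seminorm of an observable on `ℙ(ℝ^d)`. -/
def valpha (α : ℝ) (φ : Pd d → ℝ) : ℝ :=
  sSup { x | ∃ v₁ v₂ : Pd d, v₁ ≠ v₂ ∧ x = |φ v₁ - φ v₂| / pdelta v₁ v₂ ^ α }

/-- `φ` is `α`-Hölder: `v_α(φ) < ∞`. -/
def IsHolder (α : ℝ) (φ : Pd d → ℝ) : Prop :=
  BddAbove { x | ∃ v₁ v₂ : Pd d, v₁ ≠ v₂ ∧ x = |φ v₁ - φ v₂| / pdelta v₁ v₂ ^ α }

/-- The total variation distance between two finite measures. -/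
def tvDist (μ ν : Measure (GLd d)) [IsFiniteMeasure μ] [IsFiniteMeasure ν] : ℝ :=
  ((μ.toSignedMeasure - ν.toSignedMeasure).totalVariation Set.univ).toReal

/-- A measure is compactly supported. -/
def CompactlySupported (μ : Measure (GLd d)) : Prop :=
  ∃ K : Set (GLd d), IsCompact K ∧ μ Kᶜ = 0

/-- `S` is the (topological) support of `μ`. -/
def IsSupport (μ : Measure (GLd d)) (S : Set (GLd d)) : Prop :=
  μ Sᶜ = 0 ∧ ∀ x ∈ S, ∀ U : Set (GLd d), IsOpen U → x ∈ U → 0 < μ U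

/-- A measure `η` on `ℙ(ℝ^d)` is `μ`-stationary. -/
def Stationary (μ : Measure (GLd d)) (η : Measure (Pd d)) : Prop :=
  ∀ φ : Pd d → ℝ, Continuous φ → (∃ C, ∀ v, |φ v| ≤ C) →
    ∫ v, φ v ∂η = ∫ g, ∫ v, φ (pact g v) ∂η ∂μ


/-- The observable `v̂ ↦ ∫ log(‖g v‖/‖v‖) dμ(g)` on projective space. -/
def phiObs (μ : Measure (GLd d)) : Pd d → ℝ :=
  fun v => ∫ g, Real.log (‖glCLM g v.rep‖ / ‖v.rep‖) ∂μ


/-! ### Basic facts on `glCLM` -/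

instance instSecondCountableGLd : SecondCountableTopology (GLd d) := by
  have : SecondCountableTopology (Matrix (Fin d) (Fin d) ℝ) :=
    inferInstanceAs (SecondCountableTopology (Fin d → Fin d → ℝ))
  have : SecondCountableTopology (Matrix (Fin d) (Fin d) ℝ)ᵐᵒᵖ :=
    MulOpposite.opHomeomorph.symm.secondCountableTopology
  exact Units.isEmbedding_embedProduct.secondCountableTopology

instance instMeasurableMulGLd : MeasurableMul₂ (GLd d) := by infer_instance

lemma glCLM_mul (g h : GLd d) : glCLM (g * h) = glCLM g * glCLM h := by
  rw [glCLM, glCLM, glCLM, ← map_mul]; rfl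

lemma glCLM_mul_apply (g h : GLd d) (v : Ed d) : glCLM (g * h) v = glCLM g (glCLM h v) := by
  rw [glCLM_mul]; rfl

@[simp] lemma glCLM_one : glCLM (1 : GLd d) = 1 := by
  rw [glCLM]; exact map_one _

lemma continuous_glCLM : Continuous (glCLM : GLd d → (Ed d →L[ℝ] Ed d)) := by
  have h1 : Continuous fun g : GLd d => (g : Matrix (Fin d) (Fin d) ℝ) := Units.continuous_val
  have h2 : Continuous fun m : Matrix (Fin d) (Fin d) ℝ => Matrix.toEuclideanCLM (𝕜 := ℝ) m := by
    exact LinearMap.continuous_of_finiteDimensional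
      ((Matrix.toEuclideanCLM (n := Fin d) (𝕜 := ℝ)).toAlgEquiv.toLinearMap)
  exact h2.comp h1

lemma measurable_glCLM_apply (v : Ed d) : Measurable fun g : GLd d => glCLM g v :=
  (continuous_glCLM.clm_apply continuous_const).measurable

lemma glCLM_ne_zero (g : GLd d) {v : Ed d} (hv : v ≠ 0) : glCLM g v ≠ 0 := by
  intro h
  have := glCLM_leftInv g v
  rw [h, map_zero] at this
  exact hv this.symm

lemma glCLM_norm_pos (g : GLd d) {v : Ed d} (hv : v ≠ 0) : 0 < ‖glCLM g v‖ :=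
  norm_pos_iff.2 (glCLM_ne_zero g hv)

/-- Two sided distortion bound. -/
def Bd (R : ℝ) (g : GLd d) : Prop := ∀ v, ‖glCLM g v‖ ≤ R * ‖v‖ ∧ ‖v‖ ≤ R * ‖glCLM g v‖

lemma Bd.mul {R R' : ℝ} {g h : GLd d} (hR : 0 ≤ R) (hR' : 0 ≤ R') (hg : Bd R g) (hh : Bd R' h) :
    Bd (R * R') (g * h) := by
  intro v
  rw [glCLM_mul_apply]
  have h1 := hg (glCLM h v)
  have h2 := hh v
  constructor
  · calc _ ≤ R * ‖glCLM h v‖ := h1.1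
      _ ≤ R * (R' * ‖v‖) := by gcongr; exact h2.1
      _ = _ := by ring
  · calc _ ≤ R' * ‖glCLM h v‖ := h2.2
      _ ≤ R' * (R * ‖glCLM g (glCLM h v)‖) := by gcongr; exact h1.2
      _ = _ := by ring

lemma exists_Bd (S : Set (GLd d)) (hS : IsCompact S) : ∃ K : ℝ, 1 ≤ K ∧ ∀ g ∈ S, Bd K g := by
  obtain ⟨C1, h1⟩ := (hS.image (f := fun g => ‖glCLM g‖) continuous_glCLM.norm).bddAbove
  obtain ⟨C2, h2⟩ := (hS.image (f := fun g => ‖glCLM g⁻¹‖)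
    (continuous_glCLM.comp continuous_inv).norm).bddAbove
  refine ⟨max 1 (max C1 C2), le_max_left _ _, fun g hg v => ⟨?_, ?_⟩⟩
  · calc _ ≤ ‖glCLM g‖ * ‖v‖ := (glCLM g).le_opNorm v
      _ ≤ _ := by
        gcongr
        exact (h1 ⟨g, hg, rfl⟩).trans ((le_max_left _ _).trans (le_max_right _ _))
  · calc ‖v‖ = ‖glCLM g⁻¹ (glCLM g v)‖ := by rw [glCLM_leftInv]
      _ ≤ ‖glCLM g⁻¹‖ * ‖glCLM g v‖ := (glCLM g⁻¹).le_opNorm _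
      _ ≤ _ := by
        gcongr
        exact (h2 ⟨g, hg, rfl⟩).trans ((le_max_right _ _).trans (le_max_right _ _))

lemma Bd.log_bound {R : ℝ} (hR : 1 ≤ R) {g : GLd d} (hg : Bd R g) {v : Ed d} (hv : v ≠ 0) :
    |Real.log (‖glCLM g v‖ / ‖v‖)| ≤ Real.log R := by
  have hv0 : 0 < ‖v‖ := norm_pos_iff.2 hv
  have hg0 := glCLM_norm_pos g hv
  have h := hg v
  rw [abs_le]
  constructor
  · rw [← Real.log_inv]
    apply Real.log_le_log (by positivity)
    rw [le_div_iff₀ hv0, inv_mul_le_iff₀ (by positivity)]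
    exact h.2
  · apply Real.log_le_log (by positivity)
    rw [div_le_iff₀ hv0]
    exact h.1

/-! ### Convolution powers -/

lemma mconv_eq (μ ν : Measure (GLd d)) : mconv μ ν = Measure.mconv μ ν := rfl

lemma mconvN_zero (μ : Measure (GLd d)) : mconvN μ 0 = Measure.dirac 1 := rfl

lemma mconvN_succ (μ : Measure (GLd d)) [IsProbabilityMeasure μ] (n : ℕ) :
    mconvN μ (n + 1) = mconv (mconvN μ n) μ := by
  rw [mconvN]
  split_ifs with h
  · subst h
    rw [mconvN_zero, mconv_eq, Measure.dirac_one_mconv]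
  · rfl

instance instProbMconvN (μ : Measure (GLd d)) [IsProbabilityMeasure μ] (n : ℕ) :
    IsProbabilityMeasure (mconvN μ n) := by
  induction n with
  | zero => rw [mconvN_zero]; infer_instance
  | succ n ih =>
    rw [mconvN_succ, mconv]
    exact Measure.isProbabilityMeasure_map (by fun_prop)

lemma mconvN_add (μ : Measure (GLd d)) [IsProbabilityMeasure μ] (m n : ℕ) :
    mconvN μ (m + n) = mconv (mconvN μ m) (mconvN μ n) := by
  induction n with
  | zero => rw [mconvN_zero, mconv_eq, Measure.mconv_dirac_one]; rfl
  | succ n ih =>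
    rw [← add_assoc, mconvN_succ, ih, mconvN_succ]
    simp only [mconv_eq]
    rw [Measure.mconv_assoc]

lemma integral_mconv {μ ν : Measure (GLd d)} [IsProbabilityMeasure μ] [IsProbabilityMeasure ν]
    {f : GLd d → ℝ} (hf : Measurable f) :
    ∫ g, f g ∂(mconv μ ν) = ∫ p, f (p.1 * p.2) ∂(μ.prod ν) := by
  rw [mconv, integral_map (by fun_prop) hf.aestronglyMeasurable]

lemma ae_mconv {μ ν : Measure (GLd d)} [IsProbabilityMeasure μ] [IsProbabilityMeasure ν]
    {p q r : GLd d → Prop} (hp : ∀ᵐ g ∂μ, p g) (hq : ∀ᵐ g ∂ν, q g)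
    (hr : ∀ g h, p g → q h → r (g * h)) (hm : MeasurableSet {g | r g}) :
    ∀ᵐ g ∂(mconv μ ν), r g := by
  rw [mconv, ae_map_iff (by fun_prop) hm]
  have h1 : ∀ᵐ x ∂(μ.prod ν), p x.1 := Measure.quasiMeasurePreserving_fst.ae hp
  have h2 : ∀ᵐ x ∂(μ.prod ν), q x.2 := Measure.quasiMeasurePreserving_snd.ae hq
  filter_upwards [h1, h2] with x hx1 hx2 using hr _ _ hx1 hx2

lemma isClosed_Bd (R : ℝ) : IsClosed {g : GLd d | Bd R g} := by
  simp only [Bd, Set.ofPred_forall, Set.ofPred_and]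
  refine isClosed_iInter fun v => IsClosed.inter ?_ ?_
  · exact isClosed_le (continuous_glCLM.clm_apply continuous_const).norm continuous_const
  · exact isClosed_le continuous_const
      (continuous_const.mul (continuous_glCLM.clm_apply continuous_const).norm)

lemma ae_Bd_mconvN {μ : Measure (GLd d)} [IsProbabilityMeasure μ] {K : ℝ} (hK : 1 ≤ K)
    (h : ∀ᵐ g ∂μ, Bd K g) (n : ℕ) : ∀ᵐ g ∂(mconvN μ n), Bd (K ^ n) g := by
  induction n with
  | zero =>
    rw [mconvN_zero, ae_dirac_iff (isClosed_Bd _).measurableSet]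
    intro v; simp
  | succ n ih =>
    rw [mconvN_succ]
    refine ae_mconv ih h (fun g g' hg hg' => ?_) (isClosed_Bd _).measurableSet
    rw [pow_succ]
    exact hg.mul (by positivity) (by positivity) hg'

/-! ### Path space -/

/-- Path space. -/
abbrev Om (d : ℕ) := ℕ → GLd d

/-- The law of an i.i.d. sequence. -/
def PP (μ : Measure (GLd d)) [IsProbabilityMeasure μ] : Measure (Om d) :=
  Measure.infinitePi (fun _ : ℕ => μ)

instance instProbPP (μ : Measure (GLd d)) [IsProbabilityMeasure μ] :
    IsProbabilityMeasure (PP μ) := by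
  unfold PP; infer_instance

/-- Put a matrix in front of a path. -/
def pcons (p : GLd d × Om d) : Om d := fun n => Nat.casesOn n p.1 p.2

/-- The shift. -/
def pshift (ω : Om d) : Om d := fun n => ω (n + 1)

@[simp] lemma pcons_zero (p : GLd d × Om d) : pcons p 0 = p.1 := rfl
@[simp] lemma pcons_succ (p : GLd d × Om d) (n : ℕ) : pcons p (n + 1) = p.2 n := rfl
@[simp] lemma pshift_pcons (p : GLd d × Om d) : pshift (pcons p) = p.2 := rfl

lemma measurable_pcons : Measurable (pcons : GLd d × Om d → Om d) := by
  refine measurable_pi_iff.2 fun n => ?_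
  cases n with
  | zero => exact measurable_fst
  | succ n => exact (measurable_pi_apply n).comp measurable_snd

lemma measurable_pshift : Measurable (pshift : Om d → Om d) :=
  measurable_pi_iff.2 fun n => measurable_pi_apply (n + 1)

lemma map_pcons (μ : Measure (GLd d)) [IsProbabilityMeasure μ] :
    (μ.prod (PP μ)).map pcons = PP μ := by
  refine Measure.eq_infinitePi _ fun s t ht => ?_
  classical
  obtain ⟨N, hN⟩ : ∃ N, s ⊆ Finset.range (N + 1) := by
    obtain ⟨N, hN⟩ := s.exists_nat_subset_range
    exact ⟨N, hN.trans (Finset.range_mono (Nat.le_succ N))⟩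
  set t' : ℕ → Set (GLd d) := fun i => if i ∈ s then t i else Set.univ with ht'
  have hm' : ∀ i, MeasurableSet (t' i) := by
    intro i; simp only [ht']; split_ifs; exacts [ht i, MeasurableSet.univ]
  have h1 : Set.pi (s : Set ℕ) t = Set.pi (Finset.range (N + 1) : Set ℕ) t' := by
    ext x
    simp only [Set.mem_pi, ht']
    constructor
    · intro h i _
      split_ifs with hi
      · exact h i (by exact_mod_cast hi)
      · trivial
    · intro h i hi
      have hi' : i ∈ s := by exact_mod_cast hi
      have := h i (by exact_mod_cast hN hi')
      rwa [if_pos hi'] at this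
  have h2 : ∏ i ∈ s, μ (t i) = ∏ i ∈ Finset.range (N + 1), μ (t' i) := by
    rw [← Finset.prod_subset hN (f := fun i => μ (t' i))]
    · refine Finset.prod_congr rfl fun i hi => ?_
      simp [ht', hi]
    · intro i _ hi
      simp [ht', hi]
  rw [h1, h2, Measure.map_apply measurable_pcons
    (MeasurableSet.pi (Finset.countable_toSet _) fun i _ => hm' i)]
  have h3 : pcons ⁻¹' Set.pi (Finset.range (N + 1) : Set ℕ) t' =
      t' 0 ×ˢ Set.pi (Finset.range N : Set ℕ) (fun i => t' (i + 1)) := by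
    ext ⟨h, ω⟩
    simp only [Set.mem_preimage, Set.mem_pi, Set.mem_prod, Finset.coe_range, Set.mem_Iio]
    constructor
    · intro hh
      exact ⟨hh 0 (Nat.succ_pos N), fun i hi => hh (i + 1) (by omega)⟩
    · rintro ⟨ha, hb⟩ i hi
      cases i with
      | zero => exact ha
      | succ i => exact hb i (by omega)
  rw [h3, Measure.prod_prod, Finset.prod_range_succ', mul_comm]
  congr 1
  rw [PP, Measure.infinitePi_pi]
  exact fun i _ => hm' _

lemma PP_apply (μ : Measure (GLd d)) [IsProbabilityMeasure μ] {B : Set (Om d)}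
    (hB : MeasurableSet B) : PP μ B = ∫⁻ h, PP μ {ω | pcons (h, ω) ∈ B} ∂μ := by
  conv_lhs => rw [← map_pcons μ]
  rw [Measure.map_apply measurable_pcons hB, Measure.prod_apply (measurable_pcons hB)]
  rfl

/-- The random products. -/
def AA : ℕ → Om d → GLd d
  | 0, _ => 1
  | n + 1, ω => AA n (pshift ω) * ω 0

@[simp] lemma AA_zero (ω : Om d) : AA 0 ω = 1 := rfl
lemma AA_succ (n : ℕ) (ω : Om d) : AA (n + 1) ω = AA n (pshift ω) * ω 0 := rfl

lemma AA_pcons (n : ℕ) (h : GLd d) (ω : Om d) : AA (n + 1) (pcons (h, ω)) = AA n ω * h := rfl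

lemma AA_add (i n : ℕ) (ω : Om d) : AA (i + n) ω = AA n (pshift^[i] ω) * AA i ω := by
  induction i generalizing ω with
  | zero => simp
  | succ i ih =>
    rw [add_right_comm, AA_succ, ih, AA_succ, mul_assoc]; rfl

lemma measurable_AA (n : ℕ) : Measurable (AA n : Om d → GLd d) := by
  induction n with
  | zero => exact measurable_const
  | succ n ih => exact (ih.comp measurable_pshift).mul (measurable_pi_apply 0)

lemma markov_PP (μ : Measure (GLd d)) [IsProbabilityMeasure μ] (i : ℕ)
    {B : Set (GLd d × Om d)} (hB : MeasurableSet B) :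
    PP μ {ω | (AA i ω, pshift^[i] ω) ∈ B} = ∫⁻ g, PP μ {ω | (g, ω) ∈ B} ∂(mconvN μ i) := by
  induction i generalizing B with
  | zero =>
    rw [mconvN_zero, lintegral_dirac']
    · rfl
    · exact measurable_measure_prodMk_left hB
  | succ i ih =>
    have hmeas : Measurable fun ω : Om d => (AA (i + 1) ω, pshift^[i + 1] ω) :=
      (measurable_AA _).prodMk (measurable_pshift.iterate _)
    have hF : Measurable fun g : GLd d => PP μ {ω | (g, ω) ∈ B} :=
      measurable_measure_prodMk_left hB
    refine (PP_apply μ (hmeas hB)).trans ?_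
    rw [mconvN_succ, mconv_eq, Measure.lintegral_mconv hF, lintegral_lintegral_swap]
    · refine lintegral_congr fun h => ?_
      have hB' : MeasurableSet {p : GLd d × Om d | (p.1 * h, p.2) ∈ B} :=
        ((measurable_fst.mul_const h).prodMk measurable_snd) hB
      exact ih hB'
    · exact (hF.comp measurable_mul).aemeasurable

lemma map_AA (μ : Measure (GLd d)) [IsProbabilityMeasure μ] (i : ℕ) :
    (PP μ).map (AA i) = mconvN μ i := by
  ext B hB
  rw [Measure.map_apply (measurable_AA i) hB]
  have := markov_PP μ i (B := B ×ˢ Set.univ) (hB.prod MeasurableSet.univ)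
  have h2 : (AA i ⁻¹' B : Set (Om d)) = {ω | (AA i ω, pshift^[i] ω) ∈ B ×ˢ Set.univ} := by
    ext ω; simp
  rw [h2, this, ← lintegral_indicator_one hB]
  refine lintegral_congr fun g => ?_
  by_cases hg : g ∈ B <;> simp [hg]

lemma limsup_measure {Ω : Type*} [MeasurableSpace Ω] {P : Measure Ω} [IsProbabilityMeasure P]
    {B : ℕ → Set Ω} {T : Set Ω} {ε : ENNReal} (hB : ∀ k, MeasurableSet (B k))
    (hε : ∀ᶠ k in atTop, ε ≤ P (B k)) (hT : ∀ ω, (∃ᶠ k in atTop, ω ∈ B k) → ω ∈ T) :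
    ε ≤ P T := by
  set U : ℕ → Set Ω := fun n => ⋃ k ≥ n, B k with hU
  have hanti : Antitone U := by
    intro m n hmn
    exact Set.biUnion_subset_biUnion_left fun k hk => le_trans hmn hk
  have hUm : ∀ n, MeasurableSet (U n) := fun n =>
    MeasurableSet.iUnion fun k => MeasurableSet.iUnion fun _ => hB k
  have h1 : ε ≤ P (⋂ n, U n) := by
    refine ge_of_tendsto (tendsto_measure_iInter_atTop (fun n => (hUm n).nullMeasurableSet) hanti
      ⟨0, measure_ne_top _ _⟩) ?_
    filter_upwards [hε] with n hn
    exact hn.trans (measure_mono (Set.subset_biUnion_of_mem (u := B) (le_refl n)))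
  refine h1.trans (measure_mono fun ω hω => hT ω ?_)
  rw [frequently_atTop]
  intro n
  have := Set.mem_iInter.1 hω n
  simp only [hU, Set.mem_iUnion] at this
  obtain ⟨k, hk, hkB⟩ := this
  exact ⟨k, hk, hkB⟩

/-! ### The slow subspace -/

/-- Random subspace of vectors growing at rate at most `c`. -/
def Hs (c : ℝ) (ω : Om d) : Submodule ℝ (Ed d) where
  carrier := {v | ∃ C : ℝ, ∀ n : ℕ, ‖glCLM (AA n ω) v‖ ≤ C * Real.exp (c * n)}
  zero_mem' := ⟨0, fun n => by simp⟩
  add_mem' := by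
    rintro v w ⟨C, hC⟩ ⟨D, hD⟩
    refine ⟨C + D, fun n => ?_⟩
    rw [map_add, add_mul]
    exact (norm_add_le _ _).trans (add_le_add (hC n) (hD n))
  smul_mem' := by
    rintro a v ⟨C, hC⟩
    refine ⟨|a| * C, fun n => ?_⟩
    rw [map_smul, norm_smul, Real.norm_eq_abs, mul_assoc]
    exact mul_le_mul_of_nonneg_left (hC n) (abs_nonneg a)

lemma mem_Hs {c : ℝ} {ω : Om d} {v : Ed d} :
    v ∈ Hs c ω ↔ ∃ C : ℝ, ∀ n : ℕ, ‖glCLM (AA n ω) v‖ ≤ C * Real.exp (c * n) := Iff.rfl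

lemma mem_Hs_nat {c : ℝ} {ω : Om d} {v : Ed d} :
    v ∈ Hs c ω ↔ ∃ C : ℕ, ∀ n : ℕ, ‖glCLM (AA n ω) v‖ ≤ C * Real.exp (c * n) := by
  rw [mem_Hs]
  constructor
  · rintro ⟨C, hC⟩
    obtain ⟨k, hk⟩ := exists_nat_ge C
    exact ⟨k, fun n => (hC n).trans (by gcongr)⟩
  · rintro ⟨C, hC⟩
    exact ⟨C, hC⟩

lemma measurable_AA_apply (n : ℕ) (v : Ed d) :
    Measurable fun ω : Om d => glCLM (AA n ω) v :=
  (measurable_glCLM_apply v).comp (measurable_AA n)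

lemma measurableSet_Hs (c : ℝ) (v : Ed d) : MeasurableSet {ω : Om d | v ∈ Hs c ω} := by
  simp only [mem_Hs_nat, Set.ofPred_exists, Set.ofPred_forall]
  refine MeasurableSet.iUnion fun C => MeasurableSet.iInter fun n => ?_
  exact measurableSet_le (measurable_AA_apply n v).norm measurable_const

lemma mem_Hs_pcons {c : ℝ} {h : GLd d} {ω : Om d} {v : Ed d} :
    v ∈ Hs c (pcons (h, ω)) ↔ glCLM h v ∈ Hs c ω := by
  rw [mem_Hs, mem_Hs]
  constructor
  · rintro ⟨C, hC⟩
    refine ⟨C * Real.exp c, fun n => ?_⟩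
    have := hC (n + 1)
    rw [AA_pcons, glCLM_mul_apply] at this
    refine this.trans (le_of_eq ?_)
    rw [mul_assoc, ← Real.exp_add]
    push_cast
    ring_nf
  · rintro ⟨C, hC⟩
    refine ⟨max ‖v‖ (C * Real.exp (-c)), fun n => ?_⟩
    cases n with
    | zero => simp
    | succ n =>
      rw [AA_pcons, glCLM_mul_apply]
      calc _ ≤ C * Real.exp (c * n) := hC n
        _ = (C * Real.exp (-c)) * Real.exp (c * (n + 1 : ℕ)) := by
          rw [mul_assoc, ← Real.exp_add]; push_cast; ring_nf
        _ ≤ _ := by gcongr; exact le_max_right _ _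

/-- Slow up to time `N`. -/
def EC (c C : ℝ) (N : ℕ) (v : Ed d) : Set (Om d) :=
  {ω | ∀ n ≤ N, ‖glCLM (AA n ω) v‖ ≤ C * Real.exp (c * n)}

lemma measurableSet_EC (c C : ℝ) (N : ℕ) (v : Ed d) : MeasurableSet (EC c C N v) := by
  simp only [EC, Set.ofPred_forall]
  refine MeasurableSet.iInter fun n => MeasurableSet.iInter fun _ => ?_
  exact measurableSet_le (measurable_AA_apply n v).norm measurable_const

lemma mem_EC_pcons {c C : ℝ} {N : ℕ} {v : Ed d} {h : GLd d} {ω : Om d} :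
    pcons (h, ω) ∈ EC c C (N + 1) v ↔
      ‖v‖ ≤ C ∧ ω ∈ EC c (C * Real.exp c) N (glCLM h v) := by
  simp only [EC, Set.mem_ofPred_eq]
  have key : ∀ n : ℕ, C * Real.exp c * Real.exp (c * n) = C * Real.exp (c * (n + 1 : ℕ)) := by
    intro n
    rw [mul_assoc, ← Real.exp_add]
    push_cast
    ring_nf
  constructor
  · intro hh
    refine ⟨by simpa using hh 0 (Nat.zero_le _), fun n hn => ?_⟩
    have := hh (n + 1) (by omega)
    rwa [AA_pcons, glCLM_mul_apply, ← key] at this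
  · rintro ⟨h1, h2⟩ n hn
    cases n with
    | zero => simpa using h1
    | succ n =>
      rw [AA_pcons, glCLM_mul_apply, ← key]
      exact h2 n (by omega)

lemma EC_inter_le (μ : Measure (GLd d)) [IsProbabilityMeasure μ] {c : ℝ} {r : ENNReal}
    (hr : ∀ v : Ed d, v ≠ 0 → PP μ {ω | v ∈ Hs c ω} ≤ r) (N : ℕ) :
    ∀ (C : ℝ) (v : Ed d), v ≠ 0 →
      PP μ (EC c C N v ∩ {ω | v ∈ Hs c ω}) ≤ r * PP μ (EC c C N v) := by
  induction N with
  | zero =>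
    intro C v hv
    by_cases hC : ‖v‖ ≤ C
    · have : EC c C 0 v = Set.univ := by
        ext ω
        simp [EC, hC]
      rw [this, Set.univ_inter, measure_univ, mul_one]
      exact hr v hv
    · have : EC c C 0 v = ∅ := by
        ext ω
        simp [EC, hC]
      simp [this]
  | succ N ih =>
    intro C v hv
    rw [PP_apply μ ((measurableSet_EC c C (N + 1) v).inter (measurableSet_Hs c v)),
      PP_apply μ (measurableSet_EC c C (N + 1) v)]
    have hme : Measurable fun h => PP μ {ω | pcons (h, ω) ∈ EC c C (N + 1) v} :=
      measurable_measure_prodMk_left (measurable_pcons (measurableSet_EC c C (N + 1) v))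
    rw [← lintegral_const_mul _ hme]
    refine lintegral_mono fun h => ?_
    by_cases hC : ‖v‖ ≤ C
    · have := ih (C * Real.exp c) (glCLM h v) (glCLM_ne_zero h hv)
      simp only [Set.mem_inter_iff, mem_EC_pcons, hC, true_and, Set.mem_ofPred_eq, mem_Hs_pcons]
      exact this
    · simp [mem_EC_pcons, hC]

/-- If the slow event has positive probability, then there are vectors which are almost
surely slow, up to an arbitrarily small error. -/
lemma exists_almost_slow (μ : Measure (GLd d)) [IsProbabilityMeasure μ] {c C : ℝ} {v : Ed d}
    (hv : v ≠ 0)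
    (hpos : PP μ {ω | ∀ n : ℕ, ‖glCLM (AA n ω) v‖ ≤ C * Real.exp (c * n)} ≠ 0)
    {r : ENNReal} (hr1 : r < 1) : ∃ w : Ed d, w ≠ 0 ∧ r < PP μ {ω | w ∈ Hs c ω} := by
  by_contra! hcon
  set T := {ω : Om d | ∀ n : ℕ, ‖glCLM (AA n ω) v‖ ≤ C * Real.exp (c * n)} with hT
  have hTE : T = ⋂ N, EC c C N v := by
    ext ω
    simp only [hT, EC, Set.mem_iInter, Set.mem_ofPred_eq]
    exact ⟨fun h N n _ => h n, fun h n => h n n le_rfl⟩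
  have hanti : Antitone fun N => EC c C N v :=
    fun m n hmn ω hω k hk => hω k (hk.trans hmn)
  have hlim : Tendsto (fun N => PP μ (EC c C N v)) atTop (nhds (PP μ T)) := by
    rw [hTE]
    exact tendsto_measure_iInter_atTop (fun n => (measurableSet_EC c C n v).nullMeasurableSet)
      hanti ⟨0, measure_ne_top _ _⟩
  have hle : ∀ N, PP μ T ≤ r * PP μ (EC c C N v) := by
    intro N
    refine le_trans (measure_mono ?_) (EC_inter_le μ hcon N C v hv)
    intro ω hω
    exact ⟨fun n _ => hω n, ⟨C, hω⟩⟩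
  have hfin : PP μ T ≤ r * PP μ T :=
    ge_of_tendsto' (ENNReal.Tendsto.const_mul hlim (Or.inr hr1.ne_top)) hle
  have hlt : r * PP μ T < 1 * PP μ T :=
    ENNReal.mul_lt_mul_left hpos (measure_ne_top _ _) hr1
  rw [one_mul] at hlt
  exact absurd hfin (not_le.2 hlt)

lemma exists_slow (μ : Measure (GLd d)) [IsProbabilityMeasure μ] {c C : ℝ} {v : Ed d}
    (hv : v ≠ 0)
    (hpos : PP μ {ω | ∀ n : ℕ, ‖glCLM (AA n ω) v‖ ≤ C * Real.exp (c * n)} ≠ 0) :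
    ∃ w : Ed d, w ≠ 0 ∧ ∀ᵐ ω ∂(PP μ), w ∈ Hs c ω := by
  have h1 : ∀ k : ℕ, ∃ w : Ed d, ‖w‖ = 1 ∧
      1 - ((k : ENNReal) + 1)⁻¹ < PP μ {ω | w ∈ Hs c ω} := by
    intro k
    obtain ⟨w, hw, hw2⟩ := exists_almost_slow μ hv hpos
      (r := 1 - ((k : ENNReal) + 1)⁻¹)
      (ENNReal.sub_lt_self (by simp) (by simp) (by simp))
    refine ⟨‖w‖⁻¹ • w, by simp [norm_smul, hw], ?_⟩
    convert hw2 using 4 with ω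
    exact Submodule.smul_mem_iff _ (by simpa using hw)
  choose w hw1 hw2 using h1
  obtain ⟨w0, hw0, φ, hφ, hlim⟩ := (isCompact_sphere (0 : Ed d) 1).tendsto_subseq
    (x := w) (fun n => by simp [hw1])
  have hw0' : ‖w0‖ = 1 := by simpa using hw0
  refine ⟨w0, by intro h; simp [h] at hw0', ?_⟩
  have hone : (1 : ENNReal) ≤ PP μ {ω | w0 ∈ Hs c ω} := by
    have htend : Tendsto (fun k : ℕ => 1 - ((k : ENNReal) + 1)⁻¹) atTop (nhds (1 - 0)) := by
      refine ENNReal.Tendsto.sub tendsto_const_nhds ?_ (Or.inl (by simp))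
      have := (tendsto_add_atTop_iff_nat 1).2 ENNReal.tendsto_inv_nat_nhds_zero
      simpa using this
    rw [tsub_zero] at htend
    refine le_of_tendsto' htend fun m => ?_
    refine limsup_measure (B := fun k => {ω | w (φ k) ∈ Hs c ω})
      (fun k => measurableSet_Hs c _) ?_ ?_
    · filter_upwards [hφ.tendsto_atTop.eventually_ge_atTop m] with k hk
      refine le_trans ?_ (hw2 (φ k)).le
      gcongr
    · intro ω hω
      have hcl : IsClosed (Hs c ω : Set (Ed d)) := Submodule.closed_of_finiteDimensional _
      exact hcl.mem_of_frequently_of_tendsto hω hlim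
  have hone' : PP μ {ω | w0 ∈ Hs c ω} = 1 := le_antisymm prob_le_one hone
  exact (prob_compl_eq_zero_iff (measurableSet_Hs c w0)).2 hone'

/-! ### Existence of the limits, and the exponent of slow subspaces -/

lemma integrable_of_ae_abs_le {X : Type*} [MeasurableSpace X] {P : Measure X} [IsFiniteMeasure P]
    {f : X → ℝ} (hf : Measurable f) {M : ℝ} (h : ∀ᵐ x ∂P, |f x| ≤ M) : Integrable f P :=
  Integrable.of_bound hf.aestronglyMeasurable M (by simpa [Real.norm_eq_abs] using h)

lemma tendsto_fekete (μ : Measure (GLd d)) [IsProbabilityMeasure μ] (f : GLd d → ℝ)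
    (hf : Measurable f) (M : ℝ) (T : GLd d → Prop)
    (hT : ∀ n : ℕ, ∀ᵐ g ∂(mconvN μ n), T g ∧ |f g| ≤ n * M)
    (hsub : ∀ g h, T g → T h → f (g * h) ≤ f g + f h) :
    ∃ l, Tendsto (fun n : ℕ => (n : ℝ)⁻¹ * ∫ g, f g ∂(mconvN μ n)) atTop (nhds l) := by
  have hInt : ∀ n, Integrable f (mconvN μ n) := fun n =>
    integrable_of_ae_abs_le hf ((hT n).mono fun g hg => hg.2)
  have hs : Subadditive fun n => ∫ g, f g ∂(mconvN μ n) := by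
    intro m n
    have hi : Integrable (fun p : GLd d × GLd d => f (p.1 * p.2))
        ((mconvN μ m).prod (mconvN μ n)) := by
      have h1 := hInt (m + n)
      rw [mconvN_add, mconv, integrable_map_measure hf.aestronglyMeasurable (by fun_prop)] at h1
      exact h1
    have hi1 : Integrable (fun p : GLd d × GLd d => f p.1) ((mconvN μ m).prod (mconvN μ n)) :=
      (hInt m).comp_fst _
    have hi2 : Integrable (fun p : GLd d × GLd d => f p.2) ((mconvN μ m).prod (mconvN μ n)) :=
      (hInt n).comp_snd _
    have e1 : ∫ p, f p.1 ∂((mconvN μ m).prod (mconvN μ n)) = ∫ g, f g ∂(mconvN μ m) := by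
      rw [integral_fun_fst]; simp
    have e2 : ∫ p, f p.2 ∂((mconvN μ m).prod (mconvN μ n)) = ∫ g, f g ∂(mconvN μ n) := by
      rw [integral_fun_snd]; simp
    show ∫ g, f g ∂(mconvN μ (m + n)) ≤ ∫ g, f g ∂(mconvN μ m) + ∫ g, f g ∂(mconvN μ n)
    rw [mconvN_add, integral_mconv hf, ← e1, ← e2, ← integral_add hi1 hi2]
    refine integral_mono_ae hi (hi1.add hi2) ?_
    have h1 : ∀ᵐ x ∂((mconvN μ m).prod (mconvN μ n)), T x.1 :=
      Measure.quasiMeasurePreserving_fst.ae ((hT m).mono fun g hg => hg.1)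
    have h2 : ∀ᵐ x ∂((mconvN μ m).prod (mconvN μ n)), T x.2 :=
      Measure.quasiMeasurePreserving_snd.ae ((hT n).mono fun g hg => hg.1)
    filter_upwards [h1, h2] with x hx1 hx2 using hsub _ _ hx1 hx2
  have hb : BddBelow (Set.range fun n : ℕ => (∫ g, f g ∂(mconvN μ n)) / n) := by
    refine ⟨-|M|, ?_⟩
    rintro _ ⟨n, rfl⟩
    have h1 : ‖∫ g, f g ∂(mconvN μ n)‖ ≤ n * M * (mconvN μ n).real Set.univ :=
      norm_integral_le_of_norm_le_const ((hT n).mono fun g hg => by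
        simpa [Real.norm_eq_abs] using hg.2)
    rw [probReal_univ, mul_one, Real.norm_eq_abs] at h1
    have h2 := (abs_le.1 h1).1
    rcases Nat.eq_zero_or_pos n with hn | hn
    · subst hn; simp
    · have hn' : (0 : ℝ) < n := by exact_mod_cast hn
      show -|M| ≤ (∫ g, f g ∂(mconvN μ n)) / n
      rw [le_div_iff₀ hn']
      nlinarith [le_abs_self M]
  refine ⟨_, (hs.tendsto_lim hb).congr fun n => ?_⟩
  rw [div_eq_inv_mul]

lemma continuous_opNorm_comp {X E F : Type*} [TopologicalSpace X] [SeminormedAddCommGroup E]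
    [NormedSpace ℝ E] [SeminormedAddCommGroup F] [NormedSpace ℝ F] {T : X → (E →L[ℝ] F)}
    (hT : Continuous T) : Continuous fun x => ‖T x‖ := hT.norm

lemma banach_steinhaus_weighted {E F : Type*} [NormedAddCommGroup E] [NormedSpace ℝ E]
    [CompleteSpace E] [NormedAddCommGroup F] [NormedSpace ℝ F] (T : ℕ → (E →L[ℝ] F)) (a : ℕ → ℝ)
    (ha : ∀ n, 0 < a n) (h : ∀ x, ∃ C, ∀ n, ‖T n x‖ ≤ C * a n) :
    ∃ C, ∀ n, ‖T n‖ ≤ C * a n := by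
  obtain ⟨C, hC⟩ := banach_steinhaus (g := fun n => (a n)⁻¹ • T n) (by
    intro x
    obtain ⟨C, hC⟩ := h x
    refine ⟨C, fun n => ?_⟩
    show ‖(a n)⁻¹ • T n x‖ ≤ C
    rw [norm_smul, Real.norm_eq_abs, abs_of_pos (inv_pos.2 (ha n)), inv_mul_le_iff₀ (ha n),
      mul_comm]
    exact hC n)
  refine ⟨C, fun n => ?_⟩
  have h1 := hC n
  rwa [norm_smul, Real.norm_eq_abs, abs_of_pos (inv_pos.2 (ha n)), inv_mul_le_iff₀ (ha n),
    mul_comm] at h1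

/-- Restriction to a subspace. -/
def rho (W : Submodule ℝ (Ed d)) (g : GLd d) : W →L[ℝ] Ed d := (glCLM g).comp W.subtypeL

lemma rho_apply (W : Submodule ℝ (Ed d)) (g : GLd d) (w : W) : rho W g w = glCLM g w := rfl

lemma toCLM_eq_rho (W : Submodule ℝ (Ed d)) (g : GLd d) :
    LinearMap.toContinuousLinearMap ((glCLM g).toLinearMap.domRestrict W) = rho W g := by
  ext w; rfl

lemma continuous_rho (W : Submodule ℝ (Ed d)) : Continuous (rho W : GLd d → (W →L[ℝ] Ed d)) :=
  continuous_glCLM.clm_comp continuous_const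

lemma continuous_rho_norm (W : Submodule ℝ (Ed d)) :
    Continuous (fun g : GLd d => ‖rho W g‖) :=
  continuous_opNorm_comp (continuous_rho W)

lemma Bd.rho_norm_le {R : ℝ} (hR : 0 ≤ R) {g : GLd d} (hg : Bd R g) (W : Submodule ℝ (Ed d)) :
    ‖rho W g‖ ≤ R :=
  ContinuousLinearMap.opNorm_le_bound _ hR fun w => (hg w).1

lemma rho_norm_pos {W : Submodule ℝ (Ed d)} (hW : W ≠ ⊥) (g : GLd d) : 0 < ‖rho W g‖ := by
  obtain ⟨w, hw, hw0⟩ := Submodule.exists_mem_ne_zero_of_ne_bot hW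
  have h1 := (rho W g).le_opNorm ⟨w, hw⟩
  have h2 : 0 < ‖rho W g ⟨w, hw⟩‖ := glCLM_norm_pos g hw0
  by_contra! hcon
  have : ‖rho W g‖ = 0 := le_antisymm hcon (norm_nonneg (rho W g))
  rw [this, zero_mul] at h1
  linarith

lemma Bd.log_rho {R : ℝ} (hR : 1 ≤ R) {g : GLd d} (hg : Bd R g) {W : Submodule ℝ (Ed d)}
    (hW : W ≠ ⊥) : |Real.log ‖rho W g‖| ≤ Real.log R := by
  have hpos := rho_norm_pos hW g
  rw [abs_le]
  constructor
  · rw [← Real.log_inv]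
    apply Real.log_le_log (by positivity)
    obtain ⟨w, hw, hw0⟩ := Submodule.exists_mem_ne_zero_of_ne_bot hW
    have h1 := (rho W g).le_opNorm ⟨w, hw⟩
    have h2 := (hg w).2
    have h3 : 0 < ‖w‖ := norm_pos_iff.2 hw0
    change ‖glCLM g w‖ ≤ ‖rho W g‖ * ‖w‖ at h1
    rw [inv_le_iff_one_le_mul₀ (by positivity)]
    have h4 : ‖w‖ ≤ R * ‖rho W g‖ * ‖w‖ := h2.trans (by
      rw [mul_assoc]; gcongr)
    nlinarith
  · exact Real.log_le_log hpos (hg.rho_norm_le (by linarith) W)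

/-- The invariance property of a matrix. -/
def PInv (W : Submodule ℝ (Ed d)) (g : GLd d) : Prop := ∀ w ∈ W, glCLM g w ∈ W

lemma isClosed_Inv (W : Submodule ℝ (Ed d)) : IsClosed {g : GLd d | PInv W g} := by
  simp only [PInv, Set.ofPred_forall]
  refine isClosed_iInter fun v => isClosed_iInter fun _ => ?_
  have hcl : IsClosed (W : Set (Ed d)) := Submodule.closed_of_finiteDimensional _
  exact hcl.preimage (continuous_glCLM.clm_apply continuous_const)

lemma ae_Inv_mconvN {μ : Measure (GLd d)} [IsProbabilityMeasure μ] {W : Submodule ℝ (Ed d)}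
    (h : ∀ᵐ g ∂μ, PInv W g) (n : ℕ) : ∀ᵐ g ∂(mconvN μ n), PInv W g := by
  induction n with
  | zero =>
    rw [mconvN_zero, ae_dirac_iff (isClosed_Inv _).measurableSet]
    intro w hw; simpa using hw
  | succ n ih =>
    rw [mconvN_succ]
    refine ae_mconv ih h (fun g g' hg hg' w hw => ?_) (isClosed_Inv _).measurableSet
    rw [glCLM_mul_apply]
    exact hg _ (hg' _ hw)

lemma rho_mul_le {W : Submodule ℝ (Ed d)} {g h : GLd d} (hh : PInv W h) :
    ‖rho W (g * h)‖ ≤ ‖rho W g‖ * ‖rho W h‖ := by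
  refine ContinuousLinearMap.opNorm_le_bound _ (by positivity) fun w => ?_
  rw [rho_apply, glCLM_mul_apply]
  calc ‖glCLM g (glCLM h w)‖ = ‖rho W g ⟨glCLM h w, hh w w.2⟩‖ := rfl
    _ ≤ ‖rho W g‖ * ‖glCLM h w‖ := (rho W g).le_opNorm _
    _ ≤ ‖rho W g‖ * (‖rho W h‖ * ‖w‖) := by
      gcongr
      exact (rho W h).le_opNorm w
    _ = _ := by ring

lemma tendsto_L1rest {μ : Measure (GLd d)} [IsProbabilityMeasure μ] {K : ℝ} (hK : 1 ≤ K)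
    (hB : ∀ᵐ g ∂μ, Bd K g) {W : Submodule ℝ (Ed d)} (hW : W ≠ ⊥) (hinv : ∀ᵐ g ∂μ, PInv W g) :
    Tendsto (fun n : ℕ => (n : ℝ)⁻¹ * ∫ g, Real.log ‖rho W g‖ ∂(mconvN μ n)) atTop
      (nhds (L1rest μ W)) := by
  have := tendsto_fekete μ (fun g => Real.log ‖rho W g‖)
    ((continuous_rho_norm W).measurable.log) (Real.log K) (PInv W) (fun n => by
      filter_upwards [ae_Bd_mconvN hK hB n, ae_Inv_mconvN hinv n] with g h1 h2
      refine ⟨h2, ?_⟩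
      have := h1.log_rho (one_le_pow₀ hK) hW
      rwa [Real.log_pow] at this) (fun g h hg hh => by
      rw [← Real.log_mul (rho_norm_pos hW g).ne' (rho_norm_pos hW h).ne']
      exact Real.log_le_log (rho_norm_pos hW _) (rho_mul_le hh))
  rw [L1rest]
  simp only [toCLM_eq_rho]
  exact tendsto_nhds_limUnder this

lemma rho_top_norm (g : GLd d) : ‖rho ⊤ g‖ = gnorm g := by
  rw [gnorm]
  refine le_antisymm ?_ ?_
  · exact ContinuousLinearMap.opNorm_le_bound _ (norm_nonneg _) fun w => (glCLM g).le_opNorm w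
  · refine ContinuousLinearMap.opNorm_le_bound _ (norm_nonneg (rho ⊤ g)) fun w => ?_
    exact (rho ⊤ g).le_opNorm ⟨w, trivial⟩

lemma L1rest_top (μ : Measure (GLd d)) : L1rest μ ⊤ = L1 μ := by
  rw [L1rest, L1]
  simp only [toCLM_eq_rho, rho_top_norm]

lemma ae_Bd_AA {μ : Measure (GLd d)} [IsProbabilityMeasure μ] {K : ℝ} (hK : 1 ≤ K)
    (hB : ∀ᵐ g ∂μ, Bd K g) : ∀ᵐ ω ∂(PP μ), ∀ n, Bd (K ^ n) (AA n ω) := by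
  rw [ae_all_iff]
  intro n
  have := ae_Bd_mconvN hK hB n
  rw [← map_AA, ae_map_iff (measurable_AA n).aemeasurable (isClosed_Bd _).measurableSet] at this
  exact this

lemma L1rest_le {μ : Measure (GLd d)} [IsProbabilityMeasure μ] {K : ℝ} (hK : 1 ≤ K)
    (hB : ∀ᵐ g ∂μ, Bd K g) {W : Submodule ℝ (Ed d)} (hW : W ≠ ⊥) (hinv : ∀ᵐ g ∂μ, PInv W g)
    {c : ℝ} (hH : ∀ᵐ ω ∂(PP μ), W ≤ Hs c ω) : L1rest μ W ≤ c := by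
  have hlim := tendsto_L1rest hK hB hW hinv
  have hmeas : ∀ n, Measurable fun ω : Om d => Real.log ‖rho W (AA n ω)‖ := fun n =>
    ((continuous_rho_norm W).measurable.log).comp (measurable_AA n)
  have hbound : ∀ n : ℕ, ∀ᵐ ω ∂(PP μ), |(n : ℝ)⁻¹ * Real.log ‖rho W (AA n ω)‖| ≤ Real.log K := by
    intro n
    filter_upwards [ae_Bd_AA hK hB] with ω hω
    have h1 := (hω n).log_rho (one_le_pow₀ hK) hW
    rw [Real.log_pow] at h1
    rw [abs_mul, abs_of_nonneg (by positivity : (0 : ℝ) ≤ (n : ℝ)⁻¹)]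
    rcases Nat.eq_zero_or_pos n with hn | hn
    · subst hn; simpa using Real.log_nonneg hK
    · have hn' : (0 : ℝ) < n := by exact_mod_cast hn
      rw [inv_mul_le_iff₀ hn']
      exact h1
  have hdct : Tendsto (fun n : ℕ => ∫ ω, max ((n : ℝ)⁻¹ * Real.log ‖rho W (AA n ω)‖) c ∂(PP μ))
      atTop (nhds (∫ _, c ∂(PP μ))) := by
    refine tendsto_integral_of_dominated_convergence (fun _ => Real.log K + |c|) ?_ ?_ ?_ ?_
    · intro n
      exact (((hmeas n).const_mul _).max measurable_const).aestronglyMeasurable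
    · exact integrable_const _
    · intro n
      filter_upwards [hbound n] with ω hω
      rw [Real.norm_eq_abs]
      refine (abs_max_le_max_abs_abs).trans ?_
      exact max_le (by linarith [abs_nonneg c]) (by linarith [Real.log_nonneg hK])
    · filter_upwards [hH] with ω hω
      obtain ⟨C, hC⟩ := banach_steinhaus_weighted (E := W) (fun n => rho W (AA n ω))
        (fun n : ℕ => Real.exp (c * n)) (fun n => Real.exp_pos _)
        (fun w => mem_Hs.1 (hω w.2))
      have hC' : ∀ n : ℕ, Real.log ‖rho W (AA n ω)‖ ≤ Real.log (max C 1) + c * n := by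
        intro n
        have h1 := hC n
        have h2 : ‖rho W (AA n ω)‖ ≤ max C 1 * Real.exp (c * n) :=
          h1.trans (by gcongr; exact le_max_left _ _)
        have h3 := Real.log_le_log (rho_norm_pos hW _) h2
        rwa [Real.log_mul (by positivity) (by positivity), Real.log_exp] at h3
      have hup : Tendsto (fun n : ℕ => max ((n : ℝ)⁻¹ * Real.log (max C 1) + c) c) atTop
          (nhds (max (0 * Real.log (max C 1) + c) c)) := by
        refine Tendsto.max (Tendsto.add_const _ (Tendsto.mul_const _ ?_)) tendsto_const_nhds
        exact tendsto_inv_atTop_nhds_zero_nat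
      rw [zero_mul, zero_add, max_self] at hup
      refine tendsto_of_tendsto_of_tendsto_of_le_of_le' tendsto_const_nhds hup
        (Eventually.of_forall fun n => le_max_right _ _) ?_
      filter_upwards [eventually_gt_atTop 0] with n hn
      have hn' : (0 : ℝ) < n := by exact_mod_cast hn
      refine max_le_max_right c ?_
      calc (n : ℝ)⁻¹ * Real.log ‖rho W (AA n ω)‖
          ≤ (n : ℝ)⁻¹ * (Real.log (max C 1) + c * n) := by gcongr; exact hC' n
        _ = _ := by field_simp
  rw [integral_const, probReal_univ, one_smul] at hdct
  refine le_of_tendsto_of_tendsto' hlim hdct fun n => ?_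
  rw [← map_AA, integral_map (measurable_AA n).aemeasurable
    ((continuous_rho_norm W).measurable.log).aestronglyMeasurable, ← integral_const_mul]
  refine integral_mono_ae (integrable_of_ae_abs_le ((hmeas n).const_mul _) (hbound n))
    (integrable_of_ae_abs_le (M := Real.log K + |c|)
      (((hmeas n).const_mul _).max measurable_const) ?_)
    (Eventually.of_forall fun ω => le_max_left _ _)
  filter_upwards [hbound n] with ω hω
  refine (abs_max_le_max_abs_abs).trans ?_
  exact max_le (by linarith [abs_nonneg c]) (by linarith [Real.log_nonneg hK])

/-- Almost surely slow vectors. -/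
def Wslow (μ : Measure (GLd d)) [IsProbabilityMeasure μ] (c : ℝ) : Submodule ℝ (Ed d) where
  carrier := {v | ∀ᵐ ω ∂(PP μ), v ∈ Hs c ω}
  zero_mem' := by
    show ∀ᵐ ω ∂(PP μ), (0 : Ed d) ∈ Hs c ω
    exact Eventually.of_forall fun ω => (Hs c ω).zero_mem
  add_mem' := by
    intro v w hv hw
    have hv' : ∀ᵐ ω ∂(PP μ), v ∈ Hs c ω := hv
    have hw' : ∀ᵐ ω ∂(PP μ), w ∈ Hs c ω := hw
    show ∀ᵐ ω ∂(PP μ), v + w ∈ Hs c ω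
    filter_upwards [hv', hw'] with ω h1 h2 using (Hs c ω).add_mem h1 h2
  smul_mem' := by
    intro a v hv
    have hv' : ∀ᵐ ω ∂(PP μ), v ∈ Hs c ω := hv
    show ∀ᵐ ω ∂(PP μ), a • v ∈ Hs c ω
    filter_upwards [hv'] with ω h1 using (Hs c ω).smul_mem a h1

lemma mem_Wslow {μ : Measure (GLd d)} [IsProbabilityMeasure μ] {c : ℝ} {v : Ed d} :
    v ∈ Wslow μ c ↔ ∀ᵐ ω ∂(PP μ), v ∈ Hs c ω := Iff.rfl

lemma Wslow_finite_gen (W : Submodule ℝ (Ed d)) :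
    ∃ s : Finset (Ed d), Submodule.span ℝ (s : Set (Ed d)) = W :=
  (IsNoetherian.noetherian W)

lemma Wslow_le_Hs (μ : Measure (GLd d)) [IsProbabilityMeasure μ] (c : ℝ) :
    ∀ᵐ ω ∂(PP μ), Wslow μ c ≤ Hs c ω := by
  obtain ⟨s, hs⟩ := Wslow_finite_gen (Wslow μ c)
  have : ∀ᵐ ω ∂(PP μ), ∀ v ∈ s, v ∈ Hs c ω := by
    rw [Finset.eventually_all]
    intro v hv
    have : v ∈ Wslow μ c := by rw [← hs]; exact Submodule.subset_span hv
    exact this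
  filter_upwards [this] with ω hω
  rw [← hs, Submodule.span_le]
  exact fun v hv => hω v hv

lemma Wslow_inv (μ : Measure (GLd d)) [IsProbabilityMeasure μ] (c : ℝ) :
    ∀ᵐ g ∂μ, PInv (Wslow μ c) g := by
  obtain ⟨s, hs⟩ := Wslow_finite_gen (Wslow μ c)
  have h1 : ∀ᵐ g ∂μ, ∀ v ∈ s, glCLM g v ∈ Wslow μ c := by
    rw [Finset.eventually_all]
    intro v hv
    have hvW : ∀ᵐ ω ∂(PP μ), v ∈ Hs c ω := by
      have : v ∈ Wslow μ c := by rw [← hs]; exact Submodule.subset_span hv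
      exact this
    have h2 : PP μ {ω | v ∈ Hs c ω}ᶜ = 0 := hvW
    have hme : Measurable fun h => PP μ {ω | pcons (h, ω) ∈ {ω | v ∈ Hs c ω}ᶜ} :=
      measurable_measure_prodMk_left (measurable_pcons (measurableSet_Hs c v).compl)
    rw [PP_apply μ (measurableSet_Hs c v).compl, lintegral_eq_zero_iff hme] at h2
    filter_upwards [h2] with g hg
    rw [mem_Wslow]
    simp only [Set.mem_compl_iff, Set.mem_ofPred_eq, mem_Hs_pcons, Pi.zero_apply] at hg
    exact hg
  filter_upwards [h1] with g hg w hw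
  have : Wslow μ c ≤ (Wslow μ c).comap (glCLM g).toLinearMap := by
    conv_lhs => rw [← hs]
    rw [Submodule.span_le]
    exact fun v hv => hg v hv
  exact this hw

/-- Under quasi-irreducibility, no vector is slow with positive probability. -/
lemma slow_null {μ : Measure (GLd d)} [IsProbabilityMeasure μ] {K : ℝ} (hK : 1 ≤ K)
    (hB : ∀ᵐ g ∂μ, Bd K g) (hqi : QuasiIrreducible μ) {c : ℝ} (hc : c < L1 μ) {C : ℝ} {v : Ed d}
    (hv : v ≠ 0) :
    PP μ {ω | ∀ n : ℕ, ‖glCLM (AA n ω) v‖ ≤ C * Real.exp (c * n)} = 0 := by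
  by_contra hpos
  obtain ⟨w, hw0, hw⟩ := exists_slow μ hv hpos
  have hW : Wslow μ c ≠ ⊥ := by
    intro h
    have : w ∈ Wslow μ c := hw
    rw [h, Submodule.mem_bot] at this
    exact hw0 this
  have hle := L1rest_le hK hB hW (Wslow_inv μ c) (Wslow_le_Hs μ c)
  by_cases hT : Wslow μ c = ⊤
  · rw [hT, L1rest_top] at hle
    linarith
  · refine hqi ⟨Wslow μ c, hW, hT, ?_, by linarith⟩
    filter_upwards [Wslow_inv μ c] with g hg
    refine Submodule.eq_of_le_of_finrank_eq ?_ ?_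
    · rw [Submodule.map_le_iff_le_comap]
      exact hg
    · exact LinearEquiv.finrank_eq (Submodule.equivMapOfInjective _ (glLinear_injective g) _).symm

/-! ### Uniform lower bound for the expected growth -/

lemma EC_smul {c C : ℝ} {N : ℕ} {v : Ed d} {a : ℝ} (ha : 0 < a) :
    EC c (a * C) N (a • v) = EC c C N v := by
  ext ω
  simp only [EC, Set.mem_ofPred_eq]
  refine forall_congr' fun n => forall_congr' fun _ => ?_
  rw [map_smul, norm_smul, Real.norm_eq_abs, abs_of_pos ha, mul_assoc,
    mul_le_mul_iff_right₀ ha]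

lemma uniform_slow {μ : Measure (GLd d)} [IsProbabilityMeasure μ] {K : ℝ} (hK : 1 ≤ K)
    (hB : ∀ᵐ g ∂μ, Bd K g) (hqi : QuasiIrreducible μ) {c : ℝ} (hc : c < L1 μ) {ε : ENNReal}
    (hε : ε ≠ 0) : ∃ N, ∀ v : Ed d, v ≠ 0 → PP μ (EC c ‖v‖ N v) ≤ ε := by
  by_contra! hcon
  have h1 : ∀ N : ℕ, ∃ w : Ed d, ‖w‖ = 1 ∧ ε < PP μ (EC c 1 N w) := by
    intro N
    obtain ⟨v, hv, hv2⟩ := hcon N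
    have hv0 : 0 < ‖v‖ := norm_pos_iff.2 hv
    refine ⟨‖v‖⁻¹ • v, by simp [norm_smul, hv], ?_⟩
    rw [← EC_smul (a := ‖v‖) hv0, smul_smul, mul_inv_cancel₀ hv0.ne', one_smul, mul_one]
    exact hv2
  choose w hw1 hw2 using h1
  obtain ⟨w0, hw0, φ, hφ, hlim⟩ := (isCompact_sphere (0 : Ed d) 1).tendsto_subseq
    (x := w) (fun n => by simp [hw1])
  have hw0' : ‖w0‖ = 1 := by simpa using hw0
  have hw00 : w0 ≠ 0 := by intro h; simp [h] at hw0'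
  have h2 : ε ≤ PP μ {ω | ∀ n : ℕ, ‖glCLM (AA n ω) w0‖ ≤ 1 * Real.exp (c * n)} := by
    refine limsup_measure (B := fun k => EC c 1 (φ k) (w (φ k)))
      (fun k => measurableSet_EC _ _ _ _) (Eventually.of_forall fun k => (hw2 (φ k)).le) ?_
    intro ω hω n
    have hcl : IsClosed {x : Ed d | ‖glCLM (AA n ω) x‖ ≤ 1 * Real.exp (c * n)} :=
      isClosed_le (glCLM (AA n ω)).continuous.norm continuous_const
    refine hcl.mem_of_frequently_of_tendsto ?_ hlim
    have hev : ∀ᶠ k in atTop, n ≤ φ k := hφ.tendsto_atTop.eventually_ge_atTop n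
    exact (hω.and_eventually hev).mono fun k hk => hk.1 n hk.2
  rw [slow_null hK hB hqi hc hw00] at h2
  exact hε (le_antisymm h2 zero_le)

open Classical in
lemma path_lower (s : ℕ → ℝ) (Kb : ℝ) (hKb : 0 ≤ Kb) (N : ℕ)
    (hs : ∀ i, s i - Kb ≤ s (i + 1)) (m : ℕ) : ∀ i,
    s i - Kb * (((Finset.Ico i (i + m)).filter (fun j => ∀ n ≤ N, s (j + n) ≤ s j)).card + N)
      ≤ s (i + m) := by
  have hstep : ∀ m i, s i - Kb * m ≤ s (i + m) := by
    intro m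
    induction m with
    | zero => intro i; simp
    | succ m ih =>
      intro i
      have h1 := ih i
      have h2 := hs (i + m)
      rw [← add_assoc]
      push_cast
      linarith
  induction m using Nat.strong_induction_on with
  | _ m ih =>
    intro i
    by_cases hm : m ≤ N
    · refine le_trans ?_ (hstep m i)
      have : (m : ℝ) ≤ N := by exact_mod_cast hm
      have h0 : (0 : ℝ) ≤ ((Finset.Ico i (i + m)).filter
        (fun j => ∀ n ≤ N, s (j + n) ≤ s j)).card := by positivity
      nlinarith
    · push Not at hm
      by_cases hbad : ∀ n ≤ N, s (i + n) ≤ s i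
      · obtain ⟨m', rfl⟩ : ∃ m', m = m' + 1 := ⟨m - 1, by omega⟩
        have h1 := ih m' (by omega) (i + 1)
        have h2 := hs i
        have e1 : i + 1 + m' = i + (m' + 1) := by omega
        rw [e1] at h1
        have hc : ((Finset.Ico i (i + (m' + 1))).filter
            (fun j => ∀ n ≤ N, s (j + n) ≤ s j)).card =
            ((Finset.Ico (i + 1) (i + (m' + 1))).filter
            (fun j => ∀ n ≤ N, s (j + n) ≤ s j)).card + 1 := by
          rw [← Finset.insert_Ico_add_one_left_eq_Ico (by omega : i < i + (m' + 1)),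
            Finset.filter_insert, if_pos hbad, Finset.card_insert_of_notMem (by simp)]
        rw [hc]
        push_cast
        linarith
      · push Not at hbad
        obtain ⟨n, hnN, hn⟩ := hbad
        have hn0 : n ≠ 0 := by rintro rfl; simp at hn
        have h1 := ih (m - n) (by omega) (i + n)
        have e1 : i + n + (m - n) = i + m := by omega
        rw [e1] at h1
        have hc : ((Finset.Ico (i + n) (i + m)).filter
            (fun j => ∀ n ≤ N, s (j + n) ≤ s j)).card ≤
            ((Finset.Ico i (i + m)).filter
            (fun j => ∀ n ≤ N, s (j + n) ≤ s j)).card := by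
          refine Finset.card_le_card (Finset.filter_subset_filter _ ?_)
          exact Finset.Ico_subset_Ico_left (by omega)
        have hc' : (((Finset.Ico (i + n) (i + m)).filter
            (fun j => ∀ n ≤ N, s (j + n) ≤ s j)).card : ℝ) ≤
            ((Finset.Ico i (i + m)).filter
            (fun j => ∀ n ≤ N, s (j + n) ≤ s j)).card := by exact_mod_cast hc
        nlinarith

lemma pshift_iterate (i : ℕ) (ω : Om d) (n : ℕ) : pshift^[i] ω n = ω (n + i) := by
  induction i generalizing ω with
  | zero => rfl
  | succ i ih => rw [Function.iterate_succ_apply, ih]; rfl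

lemma AA_succ' (i : ℕ) (ω : Om d) : AA (i + 1) ω = ω i * AA i ω := by
  rw [AA_add i 1, AA_succ, AA_zero, one_mul, pshift_iterate, zero_add]

lemma ae_Bd_eval {μ : Measure (GLd d)} [IsProbabilityMeasure μ] {K : ℝ}
    (hB : ∀ᵐ g ∂μ, Bd K g) : ∀ᵐ ω ∂(PP μ), ∀ i, Bd K (ω i) := by
  rw [ae_all_iff]
  intro i
  exact (measurePreserving_eval_infinitePi (fun _ : ℕ => μ) i).quasiMeasurePreserving.ae hB

/-- The set of pairs for which the future is slow. -/
def BadSet (c : ℝ) (N : ℕ) (v : Ed d) : Set (GLd d × Om d) :=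
  {p | p.2 ∈ EC c ‖glCLM p.1 v‖ N (glCLM p.1 v)}

lemma measurableSet_BadSet (c : ℝ) (N : ℕ) (v : Ed d) : MeasurableSet (BadSet c N v) := by
  have e : BadSet c N v = ⋂ n : ℕ, ⋂ (_ : n ≤ N), {p : GLd d × Om d |
      ‖glCLM (AA n p.2 * p.1) v‖ ≤ ‖glCLM p.1 v‖ * Real.exp (c * n)} := by
    ext p
    simp [BadSet, EC, glCLM_mul_apply]
  rw [e]
  refine MeasurableSet.iInter fun n : ℕ => MeasurableSet.iInter fun _ => ?_
  refine measurableSet_le ?_ ?_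
  · exact ((measurable_glCLM_apply v).comp
      (((measurable_AA n).comp measurable_snd).mul measurable_fst)).norm
  · exact ((measurable_glCLM_apply v).comp measurable_fst).norm.mul_const _

/-- Bad times. -/
def BadT (c : ℝ) (N : ℕ) (v : Ed d) (i : ℕ) : Set (Om d) :=
  {ω | (AA i ω, pshift^[i] ω) ∈ BadSet c N v}

lemma measurableSet_BadT (c : ℝ) (N : ℕ) (v : Ed d) (i : ℕ) : MeasurableSet (BadT c N v i) :=
  ((measurable_AA i).prodMk (measurable_pshift.iterate i)) (measurableSet_BadSet c N v)

lemma mem_BadT {c : ℝ} {N : ℕ} {v : Ed d} (hv : v ≠ 0) {i : ℕ} {ω : Om d} :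
    ω ∈ BadT c N v i ↔ ∀ n ≤ N, Real.log ‖glCLM (AA (i + n) ω) v‖ - c * (i + n : ℕ) ≤
      Real.log ‖glCLM (AA i ω) v‖ - c * i := by
  simp only [BadT, BadSet, EC, Set.mem_ofPred_eq, ← glCLM_mul_apply, ← AA_add]
  refine forall_congr' fun n => forall_congr' fun _ => ?_
  rw [← Real.log_le_log_iff (glCLM_norm_pos _ hv)
    (mul_pos (glCLM_norm_pos _ hv) (Real.exp_pos _)),
    Real.log_mul (glCLM_norm_pos _ hv).ne' (Real.exp_pos _).ne', Real.log_exp]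
  push_cast
  constructor <;> intro h <;> linarith

lemma prob_BadT_le {μ : Measure (GLd d)} [IsProbabilityMeasure μ] {c : ℝ} {N : ℕ} {ε : ENNReal}
    (h : ∀ v : Ed d, v ≠ 0 → PP μ (EC c ‖v‖ N v) ≤ ε) {v : Ed d} (hv : v ≠ 0) (i : ℕ) :
    PP μ (BadT c N v i) ≤ ε := by
  rw [BadT, markov_PP μ i (measurableSet_BadSet c N v)]
  calc _ ≤ ∫⁻ _, ε ∂(mconvN μ i) := lintegral_mono fun g => h _ (glCLM_ne_zero g hv)
    _ = ε := by simp

lemma lower_bound {μ : Measure (GLd d)} [IsProbabilityMeasure μ] {K : ℝ} (hK : 1 ≤ K)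
    (hB : ∀ᵐ g ∂μ, Bd K g) {c : ℝ} {N : ℕ} {ε : ℝ} (hε : 0 ≤ ε)
    (h : ∀ v : Ed d, v ≠ 0 → PP μ (EC c ‖v‖ N v) ≤ ENNReal.ofReal ε)
    (L : ℕ) {v : Ed d} (hv : v ≠ 0) :
    c * L - (Real.log K + |c|) * (ε * L + N) ≤
      ∫ g, Real.log (‖glCLM g v‖ / ‖v‖) ∂(mconvN μ L) := by
  classical
  set Kb := Real.log K + |c| with hKb
  have hKb0 : 0 ≤ Kb := add_nonneg (Real.log_nonneg hK) (abs_nonneg c)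
  have hpath : ∀ᵐ ω ∂(PP μ), c * L - Kb * ((∑ i ∈ Finset.range L,
      (BadT c N v i).indicator (fun _ => (1 : ℝ)) ω) + N) ≤
        Real.log (‖glCLM (AA L ω) v‖ / ‖v‖) := by
    filter_upwards [ae_Bd_eval hB] with ω hω
    have h1 := path_lower (fun i => Real.log ‖glCLM (AA i ω) v‖ - c * i) Kb hKb0 N (by
      intro i
      have h2 := (hω i).log_bound hK (glCLM_ne_zero (AA i ω) hv)
      rw [← glCLM_mul_apply, ← AA_succ', Real.log_div (glCLM_norm_pos _ hv).ne'
        (glCLM_norm_pos _ hv).ne'] at h2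
      have h3 := (abs_le.1 h2).1
      push_cast
      have := le_abs_self c
      linarith) L 0
    rw [Real.log_div (glCLM_norm_pos _ hv).ne' (norm_pos_iff.2 hv).ne']
    have hcard : (((Finset.Ico 0 (0 + L)).filter (fun j => ∀ n ≤ N,
        Real.log ‖glCLM (AA (j + n) ω) v‖ - c * (j + n : ℕ) ≤
          Real.log ‖glCLM (AA j ω) v‖ - c * j)).card : ℝ) =
        ∑ i ∈ Finset.range L, (BadT c N v i).indicator (fun _ => (1 : ℝ)) ω := by
      rw [Finset.card_filter, zero_add, ← Finset.range_eq_Ico]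
      push_cast
      refine Finset.sum_congr rfl fun i _ => ?_
      simp only [Set.indicator, mem_BadT hv]
      push_cast
      rfl
    have h1' := h1
    beta_reduce at h1'
    rw [hcard] at h1'
    simp only [AA_zero, glCLM_one, zero_add, Nat.cast_zero, mul_zero, sub_zero,
      one_apply_eq_self] at h1'
    linarith
  have hmeas : Measurable fun g : GLd d => Real.log (‖glCLM g v‖ / ‖v‖) :=
    ((measurable_glCLM_apply v).norm.div_const _).log
  rw [← map_AA, integral_map (measurable_AA L).aemeasurable hmeas.aestronglyMeasurable]
  have hInt : Integrable (fun ω : Om d => Real.log (‖glCLM (AA L ω) v‖ / ‖v‖)) (PP μ) := by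
    refine integrable_of_ae_abs_le (hmeas.comp (measurable_AA L)) (M := Real.log (K ^ L)) ?_
    filter_upwards [ae_Bd_AA hK hB] with ω hω
    exact (hω L).log_bound (one_le_pow₀ hK) hv
  have hind : ∀ i, Integrable ((BadT c N v i).indicator (fun _ => (1 : ℝ))) (PP μ) := fun i =>
    (integrable_const 1).indicator (measurableSet_BadT c N v i)
  have hsum : Integrable (fun ω => ∑ i ∈ Finset.range L,
      (BadT c N v i).indicator (fun _ => (1 : ℝ)) ω) (PP μ) :=
    integrable_finsetSum _ fun i _ => hind i
  have hsum2 : Integrable (fun ω => (∑ i ∈ Finset.range L,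
      (BadT c N v i).indicator (fun _ => (1 : ℝ)) ω) + (N : ℝ)) (PP μ) :=
    hsum.add (integrable_const _)
  have hlow : Integrable (fun ω => c * L - Kb * ((∑ i ∈ Finset.range L,
      (BadT c N v i).indicator (fun _ => (1 : ℝ)) ω) + N)) (PP μ) :=
    (integrable_const _).sub ((hsum.add (integrable_const _)).const_mul _)
  refine le_trans ?_ (integral_mono_ae hlow hInt hpath)
  rw [integral_sub (integrable_const _) (hsum2.const_mul _),
    integral_const_mul, integral_const_mul, integral_add hsum (integrable_const _),
    integral_finsetSum _ (fun i _ => hind i)]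
  simp only [integral_const, probReal_univ, one_smul]
  have hP : ∀ i ∈ Finset.range L,
      ∫ ω, (BadT c N v i).indicator (fun _ => (1 : ℝ)) ω ∂(PP μ) ≤ ε := by
    intro i _
    rw [integral_indicator_const _ (measurableSet_BadT c N v i), smul_eq_mul, mul_one,
      measureReal_def]
    exact ENNReal.toReal_le_of_le_ofReal hε (prob_BadT_le h hv i)
  have := Finset.sum_le_sum hP
  simp only [Finset.sum_const, Finset.card_range, nsmul_eq_mul] at this
  nlinarith

/-! ### Areas and `N2` -/

/-- Area of the parallelogram spanned by two vectors. -/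
def area (u v : Ed d) : ℝ :=
  Real.sqrt (‖u‖ ^ 2 * ‖v‖ ^ 2 - (inner ℝ u v : ℝ) ^ 2)

lemma area_nonneg (u v : Ed d) : 0 ≤ area u v := Real.sqrt_nonneg _

lemma area_le (u v : Ed d) : area u v ≤ ‖u‖ * ‖v‖ := by
  rw [area]
  refine Real.sqrt_le_iff.2 ⟨by positivity, ?_⟩
  nlinarith [sq_nonneg (inner ℝ u v : ℝ)]

lemma area_sub_smul (u v : Ed d) (t : ℝ) : area u (v - t • u) = area u v := by
  rw [area, area]
  congr 1
  rw [inner_sub_right, inner_smul_right, real_inner_self_eq_norm_sq, norm_sub_sq_real,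
    inner_smul_right, norm_smul, real_inner_comm, mul_pow, Real.norm_eq_abs, sq_abs]
  ring

lemma area_smul (a b : ℝ) (u v : Ed d) : area (a • u) (b • v) = |a| * |b| * area u v := by
  rw [area, area]
  have : ‖a • u‖ ^ 2 * ‖b • v‖ ^ 2 - (inner ℝ (a • u) (b • v) : ℝ) ^ 2 =
      (|a| * |b|) ^ 2 * (‖u‖ ^ 2 * ‖v‖ ^ 2 - (inner ℝ u v : ℝ) ^ 2) := by
    rw [norm_smul, norm_smul, inner_smul_left, inner_smul_right, Real.norm_eq_abs,
      Real.norm_eq_abs, mul_pow, mul_pow, mul_pow, sq_abs, sq_abs]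
    simp only [conj_trivial, mul_pow, sq_abs]
    ring
  rw [this, Real.sqrt_mul (sq_nonneg _), Real.sqrt_sq (by positivity)]

lemma area_orth {u v : Ed d} (h : (inner ℝ u v : ℝ) = 0) : area u v = ‖u‖ * ‖v‖ := by
  rw [area, h, ← mul_pow]
  simp [Real.sqrt_sq (mul_nonneg (norm_nonneg u) (norm_nonneg v))]

/-- The set whose supremum defines `N2`. -/
def N2set (g : GLd d) : Set ℝ :=
  { x | ∃ p q : Ed d, ‖p‖ = 1 ∧ ‖q‖ = 1 ∧ (inner ℝ p q : ℝ) = 0 ∧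
    x = area (glCLM g p) (glCLM g q) }

lemma N2_eq (g : GLd d) : N2 g = sSup (N2set g) := rfl

lemma N2set_bdd (g : GLd d) : BddAbove (N2set g) := by
  refine ⟨‖glCLM g‖ * ‖glCLM g‖, ?_⟩
  rintro x ⟨p, q, hp, hq, -, rfl⟩
  refine (area_le _ _).trans ?_
  have h1 := (glCLM g).le_opNorm p
  have h2 := (glCLM g).le_opNorm q
  rw [hp, mul_one] at h1
  rw [hq, mul_one] at h2
  gcongr

lemma exists_orth (hd : 2 ≤ d) : ∃ p q : Ed d, ‖p‖ = 1 ∧ ‖q‖ = 1 ∧ (inner ℝ p q : ℝ) = 0 := by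
  refine ⟨EuclideanSpace.single ⟨0, by omega⟩ 1, EuclideanSpace.single ⟨1, by omega⟩ 1, ?_, ?_, ?_⟩
  · simp
  · simp
  · simp [EuclideanSpace.inner_single_left]

lemma N2set_nonempty (hd : 2 ≤ d) (g : GLd d) : (N2set g).Nonempty := by
  obtain ⟨p, q, hp, hq, h⟩ := exists_orth hd
  exact ⟨_, p, q, hp, hq, h, rfl⟩

lemma N2_nonneg (g : GLd d) : 0 ≤ N2 g := by
  rw [N2_eq]
  refine Real.sSup_nonneg ?_
  rintro x ⟨p, q, -, -, -, rfl⟩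
  exact area_nonneg _ _

lemma area_map_le (g : GLd d) (u v : Ed d) :
    area (glCLM g u) (glCLM g v) ≤ N2 g * area u v := by
  by_cases hu : u = 0
  · have : area (glCLM g u) (glCLM g v) = 0 := by simp [hu, area]
    rw [this]
    exact mul_nonneg (N2_nonneg g) (area_nonneg _ _)
  have hu0 : 0 < ‖u‖ := norm_pos_iff.2 hu
  set t : ℝ := (inner ℝ u v : ℝ) / ‖u‖ ^ 2 with ht
  set w := v - t • u with hw
  have e1 : area u v = area u w := (area_sub_smul u v t).symm
  have e2 : area (glCLM g u) (glCLM g v) = area (glCLM g u) (glCLM g w) := by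
    rw [hw, map_sub, map_smul, area_sub_smul]
  have horth : (inner ℝ u w : ℝ) = 0 := by
    rw [hw, inner_sub_right, inner_smul_right, real_inner_self_eq_norm_sq, ht]
    field_simp
    ring
  rw [e1, e2, area_orth horth]
  by_cases hw0 : w = 0
  · simp [hw0, area]
  have hw1 : 0 < ‖w‖ := norm_pos_iff.2 hw0
  have h1 : area (glCLM g (‖u‖⁻¹ • u)) (glCLM g (‖w‖⁻¹ • w)) ≤ N2 g := by
    rw [N2_eq]
    refine le_csSup (N2set_bdd g) ⟨_, _, ?_, ?_, ?_, rfl⟩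
    · simp [norm_smul, hu]
    · simp [norm_smul, hw0]
    · simp [inner_smul_left, inner_smul_right, horth]
  rw [map_smul, map_smul, area_smul, abs_of_pos (inv_pos.2 hu0), abs_of_pos (inv_pos.2 hw1)] at h1
  calc area (glCLM g u) (glCLM g w)
      = (‖u‖⁻¹ * ‖w‖⁻¹ * area (glCLM g u) (glCLM g w)) * (‖u‖ * ‖w‖) := by field_simp
    _ ≤ _ := by gcongr

lemma N2_mul_le (hd : 2 ≤ d) (g h : GLd d) : N2 (g * h) ≤ N2 g * N2 h := by
  rw [N2_eq (g * h)]
  refine csSup_le (N2set_nonempty hd _) ?_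
  rintro x ⟨p, q, hp, hq, horth, rfl⟩
  rw [glCLM_mul_apply, glCLM_mul_apply]
  refine (area_map_le g _ _).trans ?_
  refine mul_le_mul_of_nonneg_left ?_ (N2_nonneg g)
  exact le_csSup (N2set_bdd h) ⟨p, q, hp, hq, horth, rfl⟩

lemma N2_le_of_Bd (hd : 2 ≤ d) {R : ℝ} (hR : 0 ≤ R) {g : GLd d} (hg : Bd R g) :
    N2 g ≤ R ^ 2 := by
  rw [N2_eq]
  refine csSup_le (N2set_nonempty hd _) ?_
  rintro x ⟨p, q, hp, hq, -, rfl⟩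
  have h1 := (hg p).1
  have h2 := (hg q).1
  rw [hp, mul_one] at h1
  rw [hq, mul_one] at h2
  rw [sq]
  refine (area_le _ _).trans ?_
  gcongr

lemma Bd.inv {R : ℝ} {g : GLd d} (hg : Bd R g) : Bd R g⁻¹ := by
  intro v
  have h := hg (glCLM g⁻¹ v)
  have e : glCLM g (glCLM g⁻¹ v) = v := by
    have := glCLM_leftInv g⁻¹ v
    rwa [inv_inv] at this
  rw [e] at h
  exact ⟨h.2, h.1⟩

lemma one_le_N2_mul (hd : 2 ≤ d) (g : GLd d) : 1 ≤ N2 g⁻¹ * N2 g := by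
  obtain ⟨p, q, hp, hq, h⟩ := exists_orth hd
  have h1 := area_map_le g⁻¹ (glCLM g p) (glCLM g q)
  have h2 := area_map_le g p q
  rw [glCLM_leftInv, glCLM_leftInv] at h1
  rw [area_orth h, hp, hq, mul_one] at h1 h2
  rw [mul_one] at h2
  exact h1.trans (mul_le_mul_of_nonneg_left h2 (N2_nonneg _))

lemma N2_pos (hd : 2 ≤ d) (g : GLd d) : 0 < N2 g := by
  rcases (N2_nonneg g).eq_or_lt with h | h
  · have := one_le_N2_mul hd g
    rw [← h] at this
    norm_num at this
  · exact h

lemma log_N2_bound (hd : 2 ≤ d) {R : ℝ} (hR : 1 ≤ R) {g : GLd d} (hg : Bd R g) :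
    |Real.log (N2 g)| ≤ 2 * Real.log R := by
  have hR0 : 0 ≤ R := by linarith
  have h1 := Real.log_le_log (N2_pos hd g) (N2_le_of_Bd hd hR0 hg)
  have h2 := Real.log_le_log (N2_pos hd g⁻¹) (N2_le_of_Bd hd hR0 hg.inv)
  have h3 := Real.log_le_log one_pos (one_le_N2_mul hd g)
  rw [Real.log_one, Real.log_mul (N2_pos hd _).ne' (N2_pos hd _).ne'] at h3
  rw [Real.log_pow] at h1 h2
  push_cast at h1 h2
  rw [abs_le]
  constructor <;> linarith

lemma continuous_glCLM_apply (v : Ed d) : Continuous fun g : GLd d => glCLM g v :=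
  (ContinuousLinearMap.apply ℝ (Ed d) v).continuous.comp continuous_glCLM

lemma continuous_area {X : Type*} [TopologicalSpace X] {f g : X → Ed d} (hf : Continuous f)
    (hg : Continuous g) : Continuous fun x => area (f x) (g x) :=
  Real.continuous_sqrt.comp (((hf.norm.pow 2).mul (hg.norm.pow 2)).sub ((hf.inner hg).pow 2))

lemma measurable_N2 (hd : 2 ≤ d) : Measurable (N2 : GLd d → ℝ) := by
  refine measurable_of_Ioi fun a => IsOpen.measurableSet ?_
  rw [isOpen_iff_mem_nhds]
  intro g hg
  have hg' : a < sSup (N2set g) := hg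
  obtain ⟨x, ⟨p, q, hp, hq, horth, rfl⟩, hx⟩ := exists_lt_of_lt_csSup (N2set_nonempty hd g) hg'
  have hc := continuous_area (continuous_glCLM_apply p) (continuous_glCLM_apply q)
  filter_upwards [(hc.tendsto g).eventually_const_lt hx] with h hh
  exact lt_of_lt_of_le hh (le_csSup (N2set_bdd h) ⟨p, q, hp, hq, horth, rfl⟩)

lemma tendsto_L12 (hd : 2 ≤ d) {μ : Measure (GLd d)} [IsProbabilityMeasure μ] {K : ℝ}
    (hK : 1 ≤ K) (hB : ∀ᵐ g ∂μ, Bd K g) :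
    Tendsto (fun n : ℕ => (n : ℝ)⁻¹ * ∫ g, Real.log (N2 g) ∂(mconvN μ n)) atTop
      (nhds (L12 μ)) := by
  have := tendsto_fekete μ (fun g => Real.log (N2 g)) (measurable_N2 hd).log (2 * Real.log K)
    (fun _ => True) (fun n => by
      filter_upwards [ae_Bd_mconvN hK hB n] with g h1
      refine ⟨trivial, ?_⟩
      have := log_N2_bound hd (one_le_pow₀ hK) h1
      rw [Real.log_pow] at this
      linarith) (fun g h _ _ => by
      rw [← Real.log_mul (N2_pos hd g).ne' (N2_pos hd h).ne']
      exact Real.log_le_log (N2_pos hd _) (N2_mul_le hd g h))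
  exact tendsto_nhds_limUnder this

/-! ### The projective action -/

lemma area_comm (u v : Ed d) : area u v = area v u := by
  rw [area, area, real_inner_comm, mul_comm]

lemma area_self (u : Ed d) : area u u = 0 := by
  rw [area, real_inner_self_eq_norm_sq]
  simp [← sq]

lemma pdelta_def (x y : Pd d) : pdelta x y = area x.rep y.rep / (‖x.rep‖ * ‖y.rep‖) := rfl

lemma pdelta_nonneg (x y : Pd d) : 0 ≤ pdelta x y := by
  rw [pdelta_def]
  exact div_nonneg (area_nonneg _ _) (by positivity)

lemma pdelta_le_one (x y : Pd d) : pdelta x y ≤ 1 := by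
  rw [pdelta_def]
  exact div_le_one_of_le₀ (area_le _ _) (by positivity)

lemma normarea_smul {a b : ℝ} (ha : a ≠ 0) (hb : b ≠ 0) (u v : Ed d) :
    area (a • u) (b • v) / (‖a • u‖ * ‖b • v‖) = area u v / (‖u‖ * ‖v‖) := by
  rw [area_smul, norm_smul, norm_smul, Real.norm_eq_abs, Real.norm_eq_abs]
  have ha' : |a| ≠ 0 := abs_ne_zero.2 ha
  have hb' : |b| ≠ 0 := abs_ne_zero.2 hb
  rw [show |a| * ‖u‖ * (|b| * ‖v‖) = |a| * |b| * (‖u‖ * ‖v‖) by ring]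
  exact mul_div_mul_left _ _ (mul_ne_zero ha' hb')

lemma pdelta_mk {u v : Ed d} (hu : u ≠ 0) (hv : v ≠ 0) :
    pdelta (Projectivization.mk ℝ u hu) (Projectivization.mk ℝ v hv) =
      area u v / (‖u‖ * ‖v‖) := by
  obtain ⟨a, ha⟩ := Projectivization.exists_smul_eq_mk_rep ℝ u hu
  obtain ⟨b, hb⟩ := Projectivization.exists_smul_eq_mk_rep ℝ v hv
  rw [pdelta_def, ← ha, ← hb, Units.smul_def, Units.smul_def]
  exact normarea_smul a.ne_zero b.ne_zero u v

lemma pact_eq (g : GLd d) (x : Pd d) :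
    pact g x = Projectivization.mk ℝ (glCLM g x.rep) (glCLM_ne_zero g x.rep_nonzero) := by
  conv_lhs => rw [← Projectivization.mk_rep x]
  rw [pact, Projectivization.map_mk]
  rfl

lemma pact_mk (g : GLd d) {u : Ed d} (hu : u ≠ 0) :
    pact g (Projectivization.mk ℝ u hu) =
      Projectivization.mk ℝ (glCLM g u) (glCLM_ne_zero g hu) := by
  rw [pact, Projectivization.map_mk]
  rfl

lemma pact_mul (g h : GLd d) (x : Pd d) : pact (g * h) x = pact g (pact h x) := by
  rw [pact_eq (g * h), pact_eq h, pact_mk]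
  simp only [glCLM_mul_apply]

lemma pact_one (x : Pd d) : pact (1 : GLd d) x = x := by
  rw [pact_eq]
  simp

/-- Log of the contraction bound. -/
def XX (x y : Pd d) (g : GLd d) : ℝ :=
  Real.log (N2 g) - Real.log (‖glCLM g x.rep‖ / ‖x.rep‖) - Real.log (‖glCLM g y.rep‖ / ‖y.rep‖)

lemma measurable_XX (hd : 2 ≤ d) (x y : Pd d) : Measurable (XX x y) :=
  ((measurable_N2 hd).log.sub ((measurable_glCLM_apply x.rep).norm.div_const _).log).sub
    ((measurable_glCLM_apply y.rep).norm.div_const _).log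

lemma XX_bound (hd : 2 ≤ d) {R : ℝ} (hR : 1 ≤ R) {g : GLd d} (hg : Bd R g) (x y : Pd d) :
    |XX x y g| ≤ 4 * Real.log R := by
  have h1 := abs_le.1 (log_N2_bound hd hR hg)
  have h2 := abs_le.1 (hg.log_bound hR x.rep_nonzero)
  have h3 := abs_le.1 (hg.log_bound hR y.rep_nonzero)
  rw [XX, abs_le]
  constructor <;> linarith [h1.1, h1.2, h2.1, h2.2, h3.1, h3.2]

lemma pdelta_pact_le (hd : 2 ≤ d) (g : GLd d) (x y : Pd d) :
    pdelta (pact g x) (pact g y) ≤ Real.exp (XX x y g) * pdelta x y := by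
  have hx := norm_pos_iff.2 x.rep_nonzero
  have hy := norm_pos_iff.2 y.rep_nonzero
  have hgx := glCLM_norm_pos g x.rep_nonzero
  have hgy := glCLM_norm_pos g y.rep_nonzero
  rw [pact_eq, pact_eq, pdelta_mk, pdelta_def, XX, Real.exp_sub, Real.exp_sub,
    Real.exp_log (N2_pos hd g), Real.exp_log (by positivity), Real.exp_log (by positivity)]
  calc area (glCLM g x.rep) (glCLM g y.rep) / (‖glCLM g x.rep‖ * ‖glCLM g y.rep‖)
      ≤ (N2 g * area x.rep y.rep) / (‖glCLM g x.rep‖ * ‖glCLM g y.rep‖) := by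
        gcongr
        exact area_map_le _ _ _
    _ = _ := by field_simp

/-- Hölder functions. -/
def HolC (α C : ℝ) (φ : Pd d → ℝ) : Prop := ∀ x y, |φ x - φ y| ≤ C * pdelta x y ^ α

lemma HolC.continuous {α C : ℝ} (hα : 0 < α) {φ : Pd d → ℝ} (h : HolC α C φ) (v : Pd d) :
    Continuous fun g : GLd d => φ (pact g v) := by
  rw [continuous_iff_continuousAt]
  intro g₀
  have e : ∀ g, pdelta (pact g v) (pact g₀ v) =
      area (glCLM g v.rep) (glCLM g₀ v.rep) / (‖glCLM g v.rep‖ * ‖glCLM g₀ v.rep‖) := by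
    intro g
    rw [pact_eq, pact_eq, pdelta_mk]
  have hc : Continuous fun g => pdelta (pact g v) (pact g₀ v) := by
    simp only [e]
    refine (continuous_area (continuous_glCLM_apply _) continuous_const).div
      ((continuous_glCLM_apply _).norm.mul continuous_const) fun g => ?_
    exact (mul_pos (glCLM_norm_pos g v.rep_nonzero) (glCLM_norm_pos g₀ v.rep_nonzero)).ne'
  have hc2 : Tendsto (fun g => C * pdelta (pact g v) (pact g₀ v) ^ α) (nhds g₀) (nhds 0) := by
    have h1 : Continuous fun g => C * pdelta (pact g v) (pact g₀ v) ^ α :=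
      continuous_const.mul (hc.rpow_const fun _ => Or.inr hα.le)
    have h2 := h1.tendsto g₀
    rw [e, area_self, zero_div, Real.zero_rpow hα.ne', mul_zero] at h2
    exact h2
  rw [ContinuousAt, tendsto_iff_norm_sub_tendsto_zero]
  exact squeeze_zero (fun _ => norm_nonneg _) (fun g => h _ _) hc2

lemma HolC.nonneg_mul {α C : ℝ} {φ : Pd d → ℝ} (h : HolC α C φ) (x y : Pd d) :
    0 ≤ C * pdelta x y ^ α := (abs_nonneg _).trans (h x y)

lemma HolC.osc {α C : ℝ} (hα : 0 < α) (hC : 0 ≤ C) {φ : Pd d → ℝ} (h : HolC α C φ)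
    (x y : Pd d) : |φ x - φ y| ≤ C := by
  refine (h x y).trans ?_
  have := Real.rpow_le_one (pdelta_nonneg x y) (pdelta_le_one x y) hα.le
  nlinarith

lemma HolC.integrable {α C : ℝ} (hα : 0 < α) (hC : 0 ≤ C) {φ : Pd d → ℝ} (h : HolC α C φ)
    (v : Pd d) (ν : Measure (GLd d)) [IsProbabilityMeasure ν] :
    Integrable (fun g => φ (pact g v)) ν := by
  refine integrable_of_ae_abs_le (h.continuous hα v).measurable (M := C + |φ v|) ?_
  refine Eventually.of_forall fun g => ?_
  have h1 := h.osc hα hC (pact g v) v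
  have h2 : φ (pact g v) = (φ (pact g v) - φ v) + φ v := by ring
  rw [h2]
  exact (abs_add_le _ _).trans (by linarith)

lemma log_sub_unit {K : ℝ} (hK : 1 ≤ K) {g : GLd d} (hg : Bd K g) {u v : Ed d} (hu : ‖u‖ = 1)
    (hv : ‖v‖ = 1) (huv : 0 ≤ (inner ℝ u v : ℝ)) :
    Real.log ‖glCLM g u‖ - Real.log ‖glCLM g v‖ ≤ 2 * K ^ 2 * area u v := by
  have hu0 : u ≠ 0 := by intro h; simp [h] at hu
  have hv0 : v ≠ 0 := by intro h; simp [h] at hv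
  have hgu := glCLM_norm_pos g hu0
  have hgv := glCLM_norm_pos g hv0
  have h1 : ‖u - v‖ ≤ 2 * area u v := by
    have ha : 0 ≤ 2 * area u v := by have := area_nonneg u v; positivity
    have ht : (inner ℝ u v : ℝ) ≤ 1 := by
      have := real_inner_le_norm u v
      rwa [hu, hv, mul_one] at this
    refine (pow_le_pow_iff_left₀ (norm_nonneg _) ha two_ne_zero).1 ?_
    rw [norm_sub_sq_real, mul_pow, area, Real.sq_sqrt (by rw [hu, hv]; nlinarith), hu, hv]
    nlinarith
  rw [← Real.log_div hgu.ne' hgv.ne']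
  have h2 : Real.log (‖glCLM g u‖ / ‖glCLM g v‖) ≤ ‖glCLM g u‖ / ‖glCLM g v‖ - 1 :=
    Real.log_le_sub_one_of_pos (by positivity)
  refine h2.trans ?_
  have h3 : ‖glCLM g u‖ - ‖glCLM g v‖ ≤ K * ‖u - v‖ := by
    refine (norm_sub_norm_le _ _).trans ?_
    rw [← map_sub]
    exact (hg _).1
  have h4 := (hg v).2
  rw [hv] at h4
  rw [div_sub_one hgv.ne', div_le_iff₀ hgv]
  have hK0 : 0 ≤ K := by linarith
  have ha := area_nonneg u v
  calc _ ≤ K * (2 * area u v) * 1 := by nlinarith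
    _ ≤ K * (2 * area u v) * (K * ‖glCLM g v‖) := by gcongr
    _ = _ := by ring

lemma log_ratio_smul (g : GLd d) {a : ℝ} (ha : a ≠ 0) (u : Ed d) :
    ‖glCLM g (a • u)‖ / ‖a • u‖ = ‖glCLM g u‖ / ‖u‖ := by
  rw [map_smul, norm_smul, norm_smul]
  exact mul_div_mul_left _ _ (by simpa using ha)

lemma log_sub_gen {K : ℝ} (hK : 1 ≤ K) {g : GLd d} (hg : Bd K g) {u v : Ed d} (hu : u ≠ 0)
    (hv : v ≠ 0) :
    Real.log (‖glCLM g u‖ / ‖u‖) - Real.log (‖glCLM g v‖ / ‖v‖) ≤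
      2 * K ^ 2 * (area u v / (‖u‖ * ‖v‖)) := by
  have hu0 : 0 < ‖u‖ := norm_pos_iff.2 hu
  have hv0 : 0 < ‖v‖ := norm_pos_iff.2 hv
  obtain ⟨b, hb, hb1, hb2⟩ : ∃ b : ℝ, b ≠ 0 ∧ ‖b • v‖ = 1 ∧
      0 ≤ (inner ℝ (‖u‖⁻¹ • u) (b • v) : ℝ) := by
    rcases le_total 0 (inner ℝ u v : ℝ) with h | h
    · refine ⟨‖v‖⁻¹, by positivity, by simp [norm_smul, hv], ?_⟩
      rw [inner_smul_left, inner_smul_right]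
      simp only [conj_trivial]
      positivity
    · refine ⟨-‖v‖⁻¹, by simpa using hv, by simp [norm_smul, hv], ?_⟩
      rw [inner_smul_left, inner_smul_right]
      simp only [conj_trivial]
      have : 0 ≤ ‖u‖⁻¹ * (‖v‖⁻¹ * (- inner ℝ u v : ℝ)) := by
        have : 0 ≤ (- inner ℝ u v : ℝ) := by linarith
        positivity
      linarith
  have ha : ‖u‖⁻¹ ≠ 0 := by positivity
  have ha1 : ‖‖u‖⁻¹ • u‖ = 1 := by simp [norm_smul, hu]
  have h := log_sub_unit hK hg ha1 hb1 hb2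
  rw [← log_ratio_smul g ha u, ← log_ratio_smul g hb v, ← normarea_smul ha hb, ha1, hb1]
  simpa using h

lemma log_abs_sub {K : ℝ} (hK : 1 ≤ K) {g : GLd d} (hg : Bd K g) (x y : Pd d) :
    |Real.log (‖glCLM g x.rep‖ / ‖x.rep‖) - Real.log (‖glCLM g y.rep‖ / ‖y.rep‖)| ≤
      2 * K ^ 2 * pdelta x y := by
  have h1 := log_sub_gen hK hg x.rep_nonzero y.rep_nonzero
  have h2 := log_sub_gen hK hg y.rep_nonzero x.rep_nonzero
  rw [area_comm, mul_comm ‖y.rep‖] at h2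
  rw [pdelta_def, abs_le]
  constructor <;> linarith

lemma HolC_phiObs {μ : Measure (GLd d)} [IsProbabilityMeasure μ] {K : ℝ} (hK : 1 ≤ K)
    (hB : ∀ᵐ g ∂μ, Bd K g) {α : ℝ} (hα0 : 0 < α) (hα1 : α ≤ 1) :
    HolC α (2 * K ^ 2) (phiObs μ) := by
  intro x y
  have hi : ∀ v : Pd d, Integrable (fun g => Real.log (‖glCLM g v.rep‖ / ‖v.rep‖)) μ := by
    intro v
    refine integrable_of_ae_abs_le ((measurable_glCLM_apply v.rep).norm.div_const _).log
      (M := Real.log K) ?_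
    filter_upwards [hB] with g hg using hg.log_bound hK v.rep_nonzero
  have h1 : ∀ᵐ g ∂μ, ‖Real.log (‖glCLM g x.rep‖ / ‖x.rep‖) -
      Real.log (‖glCLM g y.rep‖ / ‖y.rep‖)‖ ≤ 2 * K ^ 2 * pdelta x y := by
    filter_upwards [hB] with g hg using log_abs_sub hK hg x y
  have h2 := norm_integral_le_of_norm_le_const h1
  rw [integral_sub (hi x) (hi y), probReal_univ, mul_one] at h2
  refine h2.trans ?_
  gcongr
  calc pdelta x y = pdelta x y ^ (1 : ℝ) := (Real.rpow_one _).symm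
    _ ≤ _ := Real.rpow_le_rpow_of_exponent_ge_of_imp (pdelta_nonneg x y) (pdelta_le_one x y) hα1
      (fun _ h => absurd h one_ne_zero)

/-! ### Total variation perturbation -/

lemma tvDist_nonneg (μ ν : Measure (GLd d)) [IsFiniteMeasure μ] [IsFiniteMeasure ν] :
    0 ≤ tvDist μ ν := ENNReal.toReal_nonneg

lemma tv_int (μ ν : Measure (GLd d)) [IsProbabilityMeasure μ] [IsProbabilityMeasure ν]
    {f : GLd d → ℝ} (hf : Measurable f) {M : ℝ} (hM : ∀ g, |f g| ≤ M) :
    |∫ g, f g ∂μ - ∫ g, f g ∂ν| ≤ M * tvDist μ ν := by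
  set s := μ.toSignedMeasure - ν.toSignedMeasure with hs
  set p := s.toJordanDecomposition.posPart with hp
  set n := s.toJordanDecomposition.negPart with hn
  have h1 : p.toSignedMeasure - n.toSignedMeasure = s :=
    s.toSignedMeasure_toJordanDecomposition
  have h2 : μ + n = ν + p := by
    rw [← Measure.toSignedMeasure_eq_toSignedMeasure_iff, Measure.toSignedMeasure_add,
      Measure.toSignedMeasure_add]
    have h1' : p.toSignedMeasure - n.toSignedMeasure =
      μ.toSignedMeasure - ν.toSignedMeasure := h1
    rw [sub_eq_sub_iff_add_eq_add] at h1'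
    rw [add_comm ν.toSignedMeasure, h1']
  have hi : ∀ (m : Measure (GLd d)) [IsFiniteMeasure m], Integrable f m := fun m _ =>
    Integrable.of_bound hf.aestronglyMeasurable M (Eventually.of_forall hM)
  have h3 : ∫ g, f g ∂μ + ∫ g, f g ∂n = ∫ g, f g ∂ν + ∫ g, f g ∂p := by
    rw [← integral_add_measure (hi μ) (hi n), ← integral_add_measure (hi ν) (hi p), h2]
  have hb : ∀ (m : Measure (GLd d)) [IsFiniteMeasure m], |∫ g, f g ∂m| ≤ M * m.real Set.univ :=
    fun m _ => norm_integral_le_of_norm_le_const (μ := m) (f := f) (C := M)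
      (Eventually.of_forall hM)
  have h4 : tvDist μ ν = p.real Set.univ + n.real Set.univ := by
    rw [tvDist, SignedMeasure.totalVariation, ← hs, ← hp, ← hn, Measure.add_apply,
      ENNReal.toReal_add (measure_ne_top _ _) (measure_ne_top _ _)]
    rfl
  have h5 := abs_le.1 (hb p)
  have h6 := abs_le.1 (hb n)
  rw [h4, mul_add, abs_le]
  constructor <;> linarith [h5.1, h5.2, h6.1, h6.2]

lemma tv_mconvN (μ ν : Measure (GLd d)) [IsProbabilityMeasure μ] [IsProbabilityMeasure ν]
    (n : ℕ) : ∀ (f : GLd d → ℝ) (_ : Measurable f) (M : ℝ) (_ : ∀ g, |f g| ≤ M),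
    |∫ g, f g ∂(mconvN μ n) - ∫ g, f g ∂(mconvN ν n)| ≤ n * (M * tvDist μ ν) := by
  induction n with
  | zero => intro f hf M hM; simp [mconvN_zero]
  | succ n ih =>
    intro f hf M hM
    have hmm : Measurable fun p : GLd d × GLd d => f (p.1 * p.2) := hf.comp (by fun_prop)
    have e : ∀ (m : Measure (GLd d)) [IsProbabilityMeasure m], ∫ g, f g ∂(mconvN m (n + 1)) =
        ∫ g, ∫ h, f (g * h) ∂m ∂(mconvN m n) := by
      intro m _
      rw [mconvN_succ, integral_mconv hf, integral_prod]
      exact Integrable.of_bound hmm.aestronglyMeasurable M (Eventually.of_forall fun _ => hM _)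
    have hF : ∀ (m : Measure (GLd d)) [IsProbabilityMeasure m],
        Measurable fun g => ∫ h, f (g * h) ∂m := fun m _ =>
      (hmm.stronglyMeasurable.integral_prod_right).measurable
    have hFb : ∀ (m : Measure (GLd d)) [IsProbabilityMeasure m], ∀ g,
        |∫ h, f (g * h) ∂m| ≤ M := fun m _ g => by
      have := norm_integral_le_of_norm_le_const (μ := m) (f := fun h => f (g * h)) (C := M)
        (Eventually.of_forall fun _ => hM _)
      simpa using this
    have hI : ∀ (m : Measure (GLd d)) [IsProbabilityMeasure m],
        Integrable (fun g => ∫ h, f (g * h) ∂m) (mconvN μ n) := fun m _ =>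
      Integrable.of_bound (hF m).aestronglyMeasurable M (Eventually.of_forall (hFb m))
    rw [e μ, e ν]
    have h1 := ih _ (hF ν) M (hFb ν)
    have h2 : |∫ g, ∫ h, f (g * h) ∂μ ∂(mconvN μ n) - ∫ g, ∫ h, f (g * h) ∂ν ∂(mconvN μ n)| ≤
        M * tvDist μ ν := by
      rw [← integral_sub (hI μ) (hI ν)]
      have := norm_integral_le_of_norm_le_const (μ := mconvN μ n)
        (f := fun g => ∫ h, f (g * h) ∂μ - ∫ h, f (g * h) ∂ν) (C := M * tvDist μ ν)
        (Eventually.of_forall fun g => tv_int μ ν (hf.comp (measurable_const_mul g))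
          fun _ => hM _)
      simpa using this
    rw [abs_le] at h1 h2 ⊢
    push_cast
    constructor <;> linarith [h1.1, h1.2, h2.1, h2.2]

/-! ### Contraction on average -/

lemma avg_contraction (hd : 2 ≤ d) {μ : Measure (GLd d)} [IsProbabilityMeasure μ] {K : ℝ}
    (hK : 1 ≤ K) (hB : ∀ᵐ g ∂μ, Bd K g) (hqi : QuasiIrreducible μ) (hgap : L2 μ < L1 μ) :
    ∃ L : ℕ, 1 ≤ L ∧ ∃ κ : ℝ, 0 < κ ∧ ∀ x y : Pd d, ∫ g, XX x y g ∂(mconvN μ L) ≤ -κ := by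
  set Δ := 2 * L1 μ - L12 μ with hΔ
  have hΔ0 : 0 < Δ := by rw [L2] at hgap; linarith
  set c := L1 μ - Δ / 8 with hc
  set Kb := Real.log K + |c| with hKb
  have hKb0 : 0 ≤ Kb := add_nonneg (Real.log_nonneg hK) (abs_nonneg c)
  set ε : ℝ := Δ / (8 * (Kb + 1)) with hε
  have hε0 : 0 < ε := by positivity
  have hKε : Kb * ε ≤ Δ / 8 := by
    rw [hε, mul_div_assoc', div_le_div_iff₀ (by positivity) (by positivity)]
    nlinarith
  obtain ⟨N, hN⟩ := uniform_slow hK hB hqi (c := c) (by linarith) (ε := ENNReal.ofReal ε)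
    (by simpa using hε0)
  have hlim := tendsto_L12 hd hK hB
  have hev := hlim.eventually_lt_const (show L12 μ < L12 μ + Δ / 8 by linarith)
  obtain ⟨M, hM⟩ := exists_nat_ge (Kb * N / (Δ / 8))
  obtain ⟨L, ⟨hL1, hLM⟩, hL⟩ := ((eventually_ge_atTop 1).and (eventually_ge_atTop M)).and hev
    |>.exists
  have hLp : (0 : ℝ) < L := by exact_mod_cast hL1
  refine ⟨L, hL1, Δ / 8 * L, by positivity, fun x y => ?_⟩
  have hx := lower_bound hK hB hε0.le hN L x.rep_nonzero
  have hy := lower_bound hK hB hε0.le hN L y.rep_nonzero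
  rw [← hKb] at hx hy
  have hBL := ae_Bd_mconvN hK hB L
  have hKL : 1 ≤ K ^ L := one_le_pow₀ hK
  have hi : ∀ v : Pd d, Integrable (fun g => Real.log (‖glCLM g v.rep‖ / ‖v.rep‖))
      (mconvN μ L) := by
    intro v
    refine integrable_of_ae_abs_le ((measurable_glCLM_apply v.rep).norm.div_const _).log
      (M := Real.log (K ^ L)) ?_
    filter_upwards [hBL] with g hg using hg.log_bound hKL v.rep_nonzero
  have hiN : Integrable (fun g => Real.log (N2 g)) (mconvN μ L) := by
    refine integrable_of_ae_abs_le (measurable_N2 hd).log (M := 2 * Real.log (K ^ L)) ?_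
    filter_upwards [hBL] with g hg using log_N2_bound hd hKL hg
  have e : ∫ g, XX x y g ∂(mconvN μ L) = ∫ g, Real.log (N2 g) ∂(mconvN μ L) -
      ∫ g, Real.log (‖glCLM g x.rep‖ / ‖x.rep‖) ∂(mconvN μ L) -
      ∫ g, Real.log (‖glCLM g y.rep‖ / ‖y.rep‖) ∂(mconvN μ L) := by
    simp only [XX]
    have hA : Integrable (fun g => Real.log (N2 g) -
      Real.log (‖glCLM g x.rep‖ / ‖x.rep‖)) (mconvN μ L) := hiN.sub (hi x)
    rw [integral_sub hA (hi y), integral_sub hiN (hi x)]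
  rw [e]
  have hNL : ∫ g, Real.log (N2 g) ∂(mconvN μ L) ≤ (L12 μ + Δ / 8) * L := by
    rw [inv_mul_lt_iff₀ hLp] at hL
    linarith
  have hML : Kb * N ≤ Δ / 8 * L := by
    rw [div_le_iff₀ (by positivity)] at hM
    have : (M : ℝ) ≤ L := by exact_mod_cast hLM
    nlinarith
  have h7 : Kb * ε * L ≤ Δ / 8 * L := by gcongr
  nlinarith

lemma exp_avg (hd : 2 ≤ d) {ν : Measure (GLd d)} [IsProbabilityMeasure ν] {R : ℝ}
    (hR : 1 ≤ R) (hB : ∀ᵐ g ∂ν, Bd R g) {κ : ℝ} (hκ : 0 < κ)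
    (h : ∀ x y : Pd d, ∫ g, XX x y g ∂ν ≤ -κ) :
    ∃ α : ℝ, 0 < α ∧ α ≤ 1 ∧ ∃ ρ : ℝ, 0 < ρ ∧ ρ < 1 ∧
      ∀ x y : Pd d, ∫ g, Real.exp (α * XX x y g) ∂ν ≤ ρ := by
  set B := 4 * Real.log R with hBdef
  have hB0 : 0 ≤ B := by have := Real.log_nonneg hR; positivity
  set α := min (min 1 (1 / κ)) (min (1 / (B + 1)) (κ / (2 * (B ^ 2 + 1)))) with hα
  have hα0 : 0 < α := by
    refine lt_min (lt_min one_pos ?_) (lt_min ?_ ?_) <;> positivity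
  have a1 : α ≤ 1 := (min_le_left _ _).trans (min_le_left _ _)
  have a2 : α * κ ≤ 1 := by
    have : α ≤ 1 / κ := (min_le_left _ _).trans (min_le_right _ _)
    rwa [le_div_iff₀ hκ] at this
  have a3 : α * (B + 1) ≤ 1 := by
    have : α ≤ 1 / (B + 1) := (min_le_right _ _).trans (min_le_left _ _)
    rwa [le_div_iff₀ (by positivity)] at this
  have a4 : α * (2 * (B ^ 2 + 1)) ≤ κ := by
    have : α ≤ κ / (2 * (B ^ 2 + 1)) := (min_le_right _ _).trans (min_le_right _ _)
    rwa [le_div_iff₀ (by positivity)] at this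
  refine ⟨α, hα0, a1, 1 - α * κ / 2, by linarith, by nlinarith, fun x y => ?_⟩
  have hX : ∀ᵐ g ∂ν, |XX x y g| ≤ B := by
    filter_upwards [hB] with g hg using XX_bound hd hR hg x y
  have hiX : Integrable (XX x y) ν := integrable_of_ae_abs_le (measurable_XX hd x y) hX
  have hpt : ∀ᵐ g ∂ν, Real.exp (α * XX x y g) ≤ 1 + α * XX x y g + α ^ 2 * B ^ 2 := by
    filter_upwards [hX] with g hg
    have h1 : |α * XX x y g| ≤ 1 := by
      rw [abs_mul, abs_of_pos hα0]
      nlinarith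
    have h2 := (abs_le.1 (Real.abs_exp_sub_one_sub_id_le h1)).2
    have h3 : XX x y g ^ 2 ≤ B ^ 2 := sq_le_sq' (by linarith [(abs_le.1 hg).1]) (abs_le.1 hg).2
    rw [mul_pow] at h2
    have h4 : α ^ 2 * XX x y g ^ 2 ≤ α ^ 2 * B ^ 2 := by gcongr
    linarith
  have hr : Integrable (fun g => 1 + α * XX x y g + α ^ 2 * B ^ 2) ν :=
    ((integrable_const _).add (hiX.const_mul α)).add (integrable_const _)
  have hl : Integrable (fun g => Real.exp (α * XX x y g)) ν := by
    refine integrable_of_ae_abs_le (Real.measurable_exp.comp ((measurable_XX hd x y).const_mul α))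
      (M := 1 + α * B + α ^ 2 * B ^ 2) ?_
    filter_upwards [hpt, hX] with g h1 h2
    rw [abs_of_pos (Real.exp_pos _)]
    have := (abs_le.1 h2).2
    nlinarith
  refine (integral_mono_ae hl hr hpt).trans ?_
  have hA : Integrable (fun g => 1 + α * XX x y g) ν :=
    (integrable_const _).add (hiX.const_mul α)
  rw [integral_add hA (integrable_const _), integral_add (integrable_const _) (hiX.const_mul α),
    integral_const_mul]
  simp only [integral_const, probReal_univ, one_smul]
  have := h x y
  nlinarith

lemma exp_avg_perturb (hd : 2 ≤ d) {μ μ₀ : Measure (GLd d)} [IsProbabilityMeasure μ]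
    [IsProbabilityMeasure μ₀] {K : ℝ} (hK : 1 ≤ K) (hB : ∀ᵐ g ∂μ, Bd K g)
    (hB0 : ∀ᵐ g ∂μ₀, Bd K g) {L : ℕ} {α : ℝ} (hα : 0 < α) {ρ : ℝ} {x y : Pd d}
    (h : ∫ g, Real.exp (α * XX x y g) ∂(mconvN μ₀ L) ≤ ρ) :
    ∫ g, Real.exp (α * XX x y g) ∂(mconvN μ L) ≤
      ρ + L * (Real.exp (α * (4 * Real.log (K ^ L))) * tvDist μ μ₀) := by
  set B := 4 * Real.log (K ^ L) with hBdef
  set f : GLd d → ℝ := fun g => min (Real.exp (α * XX x y g)) (Real.exp (α * B)) with hf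
  have hfm : Measurable f :=
    (Real.measurable_exp.comp ((measurable_XX hd x y).const_mul α)).min measurable_const
  have hfb : ∀ g, |f g| ≤ Real.exp (α * B) := by
    intro g
    rw [abs_of_nonneg (le_min (Real.exp_pos _).le (Real.exp_pos _).le)]
    exact min_le_right _ _
  have e : ∀ (m : Measure (GLd d)) [IsProbabilityMeasure m], (∀ᵐ g ∂m, Bd K g) →
      ∫ g, Real.exp (α * XX x y g) ∂(mconvN m L) = ∫ g, f g ∂(mconvN m L) := by
    intro m _ hm
    refine integral_congr_ae ?_
    filter_upwards [ae_Bd_mconvN hK hm L] with g hg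
    have := (abs_le.1 (XX_bound hd (one_le_pow₀ hK) hg x y)).2
    rw [hf]
    refine (min_eq_left ?_).symm
    rw [Real.exp_le_exp]
    gcongr
  have h1 := (abs_le.1 (tv_mconvN μ μ₀ L f hfm _ hfb)).2
  rw [e μ hB]
  rw [e μ₀ hB0] at h
  linarith

/-! ### Iterates of the Markov operator -/

lemma HolC.avg (hd : 2 ≤ d) {ν : Measure (GLd d)} [IsProbabilityMeasure ν] {R : ℝ}
    (hR : 1 ≤ R) (hB : ∀ᵐ g ∂ν, Bd R g) {α ρ C : ℝ} (hα : 0 < α) (hC : 0 ≤ C)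
    (h : ∀ x y : Pd d, ∫ g, Real.exp (α * XX x y g) ∂ν ≤ ρ) {φ : Pd d → ℝ}
    (hφ : HolC α C φ) : HolC α (ρ * C) (fun v => ∫ g, φ (pact g v) ∂ν) := by
  intro x y
  beta_reduce
  rw [← integral_sub (hφ.integrable hα hC x ν) (hφ.integrable hα hC y ν)]
  have hl : Integrable (fun g => Real.exp (α * XX x y g)) ν := by
    refine integrable_of_ae_abs_le (Real.measurable_exp.comp ((measurable_XX hd x y).const_mul α))
      (M := Real.exp (α * (4 * Real.log R))) ?_
    filter_upwards [hB] with g hg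
    have := (abs_le.1 (XX_bound hd hR hg x y)).2
    rw [abs_of_pos (Real.exp_pos _), Real.exp_le_exp]
    gcongr
  have hp : 0 ≤ C * pdelta x y ^ α := hφ.nonneg_mul x y
  have h1 : ‖∫ g, (φ (pact g x) - φ (pact g y)) ∂ν‖ ≤
      ∫ g, (C * pdelta x y ^ α) * Real.exp (α * XX x y g) ∂ν := by
    refine norm_integral_le_of_norm_le (hl.const_mul _) (Eventually.of_forall fun g => ?_)
    refine (hφ _ _).trans ?_
    have h2 : pdelta (pact g x) (pact g y) ^ α ≤ (Real.exp (XX x y g) * pdelta x y) ^ α :=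
      Real.rpow_le_rpow (pdelta_nonneg _ _) (pdelta_pact_le hd g x y) hα.le
    rw [Real.mul_rpow (Real.exp_pos _).le (pdelta_nonneg _ _), ← Real.exp_mul,
      mul_comm (XX x y g)] at h2
    calc _ ≤ C * (Real.exp (α * XX x y g) * pdelta x y ^ α) := by gcongr
      _ = _ := by ring
  rw [integral_const_mul] at h1
  refine h1.trans ?_
  have := mul_le_mul_of_nonneg_left (h x y) hp
  linarith

lemma HolC.one_step (hd : 2 ≤ d) {μ : Measure (GLd d)} [IsProbabilityMeasure μ] {K : ℝ}
    (hK : 1 ≤ K) (hB : ∀ᵐ g ∂μ, Bd K g) {α C : ℝ} (hα : 0 < α) (hC : 0 ≤ C) {φ : Pd d → ℝ}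
    (hφ : HolC α C φ) : HolC α (Real.exp (α * (4 * Real.log K)) * C) (Qop μ φ) := by
  refine hφ.avg hd hK hB hα hC fun x y => ?_
  have h1 : ∀ᵐ g ∂μ, ‖Real.exp (α * XX x y g)‖ ≤ Real.exp (α * (4 * Real.log K)) := by
    filter_upwards [hB] with g hg
    have := (abs_le.1 (XX_bound hd hK hg x y)).2
    rw [Real.norm_eq_abs, abs_of_pos (Real.exp_pos _), Real.exp_le_exp]
    gcongr
  have := norm_integral_le_of_norm_le_const h1
  rw [probReal_univ, mul_one] at this
  exact (le_abs_self _).trans this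

lemma HolC.iter_step (hd : 2 ≤ d) {μ : Measure (GLd d)} [IsProbabilityMeasure μ] {K : ℝ}
    (hK : 1 ≤ K) (hB : ∀ᵐ g ∂μ, Bd K g) {α C : ℝ} (hα : 0 < α) (hC : 0 ≤ C) {φ : Pd d → ℝ}
    (hφ : HolC α C φ) (n : ℕ) :
    HolC α (Real.exp (α * (4 * Real.log K)) ^ n * C) ((Qop μ)^[n] φ) := by
  induction n with
  | zero => simpa using hφ
  | succ n ih =>
    rw [Function.iterate_succ_apply']
    have := ih.one_step hd hK hB hα (by positivity)
    rw [← mul_assoc, ← pow_succ'] at this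
    exact this

lemma Qop_iter {μ : Measure (GLd d)} [IsProbabilityMeasure μ] {α C : ℝ} (hα : 0 < α)
    (hC : 0 ≤ C) {φ : Pd d → ℝ} (hφ : HolC α C φ) (n : ℕ) :
    ∀ v, (Qop μ)^[n] φ v = ∫ g, φ (pact g v) ∂(mconvN μ n) := by
  induction n with
  | zero =>
    intro v
    rw [mconvN_zero, integral_dirac' _ _ (hφ.continuous hα v).measurable.stronglyMeasurable,
      pact_one]
    rfl
  | succ n ih =>
    intro v
    have hm := (hφ.continuous hα v).measurable
    rw [Function.iterate_succ_apply', Qop, mconvN_succ, integral_mconv hm, integral_prod_symm]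
    · refine integral_congr_ae (Eventually.of_forall fun h => ?_)
      beta_reduce
      rw [ih]
      simp only [pact_mul]
    · have hmm : Measurable fun p : GLd d × GLd d => φ (pact (p.1 * p.2) v) :=
        hm.comp (g := fun g => φ (pact g v)) (f := fun p : GLd d × GLd d => p.1 * p.2) (by fun_prop)
      refine integrable_of_ae_abs_le hmm (M := C + |φ v|) (Eventually.of_forall fun p => ?_)
      have h1 := hφ.osc hα hC (pact (p.1 * p.2) v) v
      have h2 : φ (pact (p.1 * p.2) v) = (φ (pact (p.1 * p.2) v) - φ v) + φ v := by ring
      rw [h2]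
      exact (abs_add_le _ _).trans (by linarith)

lemma HolC.iter_contract (hd : 2 ≤ d) {μ : Measure (GLd d)} [IsProbabilityMeasure μ] {K : ℝ}
    (hK : 1 ≤ K) (hB : ∀ᵐ g ∂μ, Bd K g) {α C ρ : ℝ} (hα : 0 < α) (hC : 0 ≤ C) (hρ : 0 ≤ ρ)
    {L : ℕ} (h : ∀ x y : Pd d, ∫ g, Real.exp (α * XX x y g) ∂(mconvN μ L) ≤ ρ)
    {φ : Pd d → ℝ} (hφ : HolC α C φ) (k : ℕ) :
    HolC α (ρ ^ k * C) ((Qop μ)^[L * k] φ) := by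
  induction k with
  | zero => simpa using hφ
  | succ k ih =>
    have e : (Qop μ)^[L * (k + 1)] φ =
        fun v => ∫ g, ((Qop μ)^[L * k] φ) (pact g v) ∂(mconvN μ L) := by
      rw [show L * (k + 1) = L + L * k by ring, Function.iterate_add_apply]
      funext v
      exact Qop_iter hα (by positivity) ih L v
    rw [e, pow_succ', mul_assoc]
    exact ih.avg hd (one_le_pow₀ hK) (ae_Bd_mconvN hK hB L) hα (by positivity) h

lemma cauchy_step {μ : Measure (GLd d)} [IsProbabilityMeasure μ] {α C : ℝ} (hα : 0 < α)
    (hC : 0 ≤ C) {ψ : Pd d → ℝ} (hψ : HolC α C ψ) (v : Pd d) : |Qop μ ψ v - ψ v| ≤ C := by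
  have e : Qop μ ψ v - ψ v = ∫ g, (ψ (pact g v) - ψ v) ∂μ := by
    rw [integral_sub (hψ.integrable hα hC v μ) (integrable_const _)]
    simp [Qop]
  rw [e]
  have := norm_integral_le_of_norm_le_const (μ := μ) (f := fun g => ψ (pact g v) - ψ v) (C := C)
    (Eventually.of_forall fun g => hψ.osc hα hC _ _)
  simpa using this

lemma geom_floor {ρ : ℝ} (h0 : 0 < ρ) (h1 : ρ < 1) {L : ℕ} (hL : 1 ≤ L) (n : ℕ) :
    ρ ^ (n / L) ≤ ρ⁻¹ * (ρ ^ (-(1 / (L : ℝ)))) ^ (-(n : ℝ)) := by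
  have hLp : (0 : ℝ) < L := by exact_mod_cast hL
  rw [← Real.rpow_mul h0.le, ← Real.rpow_neg_one, ← Real.rpow_add h0, ← Real.rpow_natCast]
  refine Real.rpow_le_rpow_of_exponent_ge h0 h1.le ?_
  have h2 : (n : ℝ) < L * ((n / L : ℕ) + 1) := by
    have := Nat.lt_mul_div_succ n (by omega : 0 < L)
    exact_mod_cast this
  have h3 : (n : ℝ) / L < (n / L : ℕ) + 1 := by
    rw [div_lt_iff₀ hLp]
    linarith
  have : -(1 / (L : ℝ)) * -(n : ℝ) = n / L := by field_simp
  rw [this]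
  linarith

theorem cauchy_iterates_markov_operator
    (d : ℕ) (hd : 2 ≤ d) (S : Set (GLd d)) (hS : IsCompact S)
    (μ₀ : Measure (GLd d)) [IsProbabilityMeasure μ₀] (hμ₀S : μ₀ Sᶜ = 0)
    (hqi : QuasiIrreducible μ₀) (hgap : L2 μ₀ < L1 μ₀) :
    ∃ C : ℝ, 0 < C ∧ ∃ θ : ℝ, 1 < θ ∧ ∃ ε : ℝ, 0 < ε ∧
      ∀ (μ : Measure (GLd d)) [IsProbabilityMeasure μ], μ Sᶜ = 0 →
        tvDist μ μ₀ < ε → ∀ n : ℕ, 1 ≤ n → ∀ v : Pd d,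
          |(Qop μ)^[n + 1] (phiObs μ) v - (Qop μ)^[n] (phiObs μ) v| ≤
            C * θ ^ (-(n : ℝ)) := by
  obtain ⟨K, hK, hKS⟩ := exists_Bd S hS
  have hBd : ∀ (μ : Measure (GLd d)), μ Sᶜ = 0 → ∀ᵐ g ∂μ, Bd K g := by
    intro μ hμ
    have : ∀ᵐ g ∂μ, g ∈ S := hμ
    filter_upwards [this] with g hg using hKS g hg
  have hB0 := hBd μ₀ hμ₀S
  obtain ⟨L, hL, κ, hκ, hX⟩ := avg_contraction hd hK hB0 hqi hgap
  obtain ⟨α, hα0, hα1, ρ, hρ0, hρ1, hexp⟩ :=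
    exp_avg hd (one_le_pow₀ hK) (ae_Bd_mconvN hK hB0 L) hκ hX
  set E := Real.exp (α * (4 * Real.log (K ^ L))) with hE
  have hE0 : 0 < E := Real.exp_pos _
  set R := Real.exp (α * (4 * Real.log K)) with hR
  have hR1 : 1 ≤ R := by
    rw [hR, Real.one_le_exp_iff]
    have := Real.log_nonneg hK
    positivity
  have hLp : (0 : ℝ) < L := by exact_mod_cast hL
  set ρ' := (1 + ρ) / 2 with hρ'
  have hρ'0 : 0 < ρ' := by positivity
  have hρ'1 : ρ' < 1 := by rw [hρ']; linarith
  refine ⟨ρ'⁻¹ * (R ^ L * (2 * K ^ 2)), by positivity, ρ' ^ (-(1 / (L : ℝ))), ?_,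
    (1 - ρ) / (2 * (L * E)), div_pos (by linarith) (by positivity), ?_⟩
  · exact Real.one_lt_rpow_of_pos_of_lt_one_of_neg hρ'0 hρ'1 (by
      have : 0 < 1 / (L : ℝ) := by positivity
      linarith)
  intro μ _ hμS htv n _ v
  have hB := hBd μ hμS
  have hcon : ∀ x y : Pd d, ∫ g, Real.exp (α * XX x y g) ∂(mconvN μ L) ≤ ρ' := by
    intro x y
    refine (exp_avg_perturb hd hK hB hB0 hα0 (hexp x y)).trans ?_
    rw [← hE]
    rw [lt_div_iff₀ (by positivity)] at htv
    rw [hρ']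
    linarith
  have h1 := HolC_phiObs hK hB hα0 hα1
  have h2 := h1.iter_step hd hK hB hα0 (by positivity) (n % L)
  rw [← hR] at h2
  have h3 := h2.iter_contract hd hK hB hα0 (by positivity) hρ'0.le hcon (n / L)
  rw [← Function.iterate_add_apply, Nat.div_add_mod] at h3
  have h4 := cauchy_step (μ := μ) hα0 (by positivity) h3 v
  rw [Function.iterate_succ_apply']
  refine h4.trans ?_
  have h5 : R ^ (n % L) ≤ R ^ L := pow_le_pow_right₀ hR1 (Nat.mod_lt n (by omega)).le
  have h6 := geom_floor hρ'0 hρ'1 hL n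
  calc ρ' ^ (n / L) * (R ^ (n % L) * (2 * K ^ 2))
      ≤ (ρ'⁻¹ * (ρ' ^ (-(1 / (L : ℝ)))) ^ (-(n : ℝ))) * (R ^ L * (2 * K ^ 2)) := by
        gcongr
    _ = _ := by ring

end
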